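/- arXiv:2506.06477 — 3 statements merged into one kernel-verified Lean document; each statement's English description precedes it below -/
import Mathlib

section
/- For every even integer n ≥ 12 and every set S of n points in the Euclidean plane in general position that is partitioned into a set R of n/2 red points and a set B of n/2 blue points, there exist a red point u ∈ R and a blue point v ∈ B such that every closed disk containing both u and v contains at least ⌈n/(6+√26)⌉ + 1 points of S, where ⌈n/(6+√26)⌉ denotes the least integer greater than or equal to the real number n/(6+√26). -/
/-!
Lift the `n` points to the paraboloid `z = x² + y²` in `ℝ³`. Circles become planes, disks become
the parts below planes, and `inCirc` is the orientation determinant of four lifted points. An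
ordered triple of points defines an oriented plane; its level is the number of points strictly
on the positive side. The argument compares two estimates of the number of ordered triples of
level `j`.

* The number of triples of level `j` is exactly `6 (j + 1) (n - 2 - j)` (`numLevel_eq`). For
  `j = 0` this says that the convex hull of the lifted points has `2 n - 4` facets: sweep in a
  generic direction; every facet has a middle vertex in the sweep order, and every vertex except
  the first and the last is the middle vertex of exactly two facets. The latter becomes, after
  inversion at the vertex, the fact that a line separating a planar set crosses exactly one upper
  and one lower hull edge (`bridge`). Higher levels follow by double counting over the deletion
  of one point (`sum_numLevel_erase`).

* If `u` and `v` lie in a disk containing at most `j` other points, then some `w` makes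
  `(u, v, w)` a triple of level exactly `j` (`exists_third`): rotate a plane about the line
  through the lifts of `u` and `v`; the number of points on its positive side changes by one at
  a time and passes from at most `j` to at least `j` (`exists_level`).

Suppose that every red-blue pair lies in a disk with at most `k = ⌈n / (6 + √26)⌉` points, and put
`j = k - 2`. The `n² / 2` ordered red-blue pairs extend to distinct triples of level `j`, so
`n² / 2 ≤ 6 (j + 1) (n - 2 - j)`. This contradicts `11 (j + 1) < n`, which holds because
`j + 1 = k - 1 < n / (6 + √26)` and `6 + √26 > 11`.
-/

open EuclideanGeometry Metric

noncomputable section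

/-- Points of the Euclidean plane. -/
abbrev Pt := EuclideanSpace ℝ (Fin 2)

/-- A set of points in the plane is in general position if no three of its points are
collinear and no four of its points are concyclic. -/
def GenPos (S : Set Pt) : Prop :=
  (∀ T ⊆ S, T.ncard = 3 → ¬Collinear ℝ T) ∧
  (∀ T ⊆ S, T.ncard = 4 → ¬Cospherical T)

section Counting

open scoped Classical

/-! ### Two lemmas on planar configurations -/

/-- Twice the signed area of the triangle `a b d`, for points given by coordinate functions. -/
def orient {ι : Type*} (x y : ι → ℝ) (a b d : ι) : ℝ :=
  (x b - x a) * (y d - y a) - (y b - y a) * (x d - x a)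

/-- A finite planar set in general position with points on both sides of the line `x = 0` has
exactly one upper hull edge crossing that line. It is the segment joining the two sides that
meets the line highest. -/
lemma bridge {ι : Type*} (P : Finset ι) (x y : ι → ℝ) (hx : ∀ a ∈ P, x a ≠ 0)
    (hneg : ∃ a ∈ P, x a < 0) (hpos : ∃ b ∈ P, 0 < x b)
    (hgp : ∀ a ∈ P, ∀ b ∈ P, ∀ d ∈ P, a ≠ b → a ≠ d → b ≠ d → orient x y a b d ≠ 0) :
    ((P ×ˢ P).filter fun t => x t.1 < 0 ∧ 0 < x t.2 ∧
      ∀ d ∈ P, orient x y t.1 t.2 d ≤ 0).card = 1 := by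
  obtain ⟨a₀, ha₀, hxa₀⟩ := hneg
  obtain ⟨b₀, hb₀, hxb₀⟩ := hpos
  obtain ⟨⟨a, b⟩, hab, hmax⟩ := Finset.exists_max_image
    ((P ×ˢ P).filter fun t : ι × ι => x t.1 < 0 ∧ 0 < x t.2)
    (fun t => (x t.2 * y t.1 - x t.1 * y t.2) / (x t.2 - x t.1))
    ⟨(a₀, b₀), by simp [*]⟩
  simp only [Finset.mem_filter, Finset.mem_product] at hab hmax
  obtain ⟨⟨ha, hb⟩, hxa, hxb⟩ := hab
  -- a point above the line `a b` could replace the endpoint on its own side and raise the crossing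
  have hall : ∀ d ∈ P, orient x y a b d ≤ 0 := by
    intro d hd
    by_contra hcon
    push Not at hcon
    rcases lt_or_gt_of_ne (hx d hd) with h | h
    · have := hmax (d, b) ⟨⟨hd, hb⟩, h, hxb⟩
      simp only at this
      rw [div_le_div_iff₀ (by linarith) (by linarith)] at this
      have h2 := mul_pos hxb hcon
      unfold orient at h2
      nlinarith
    · have := hmax (a, d) ⟨⟨ha, hd⟩, hxa, h⟩
      simp only at this
      rw [div_le_div_iff₀ (by linarith) (by linarith)] at this
      have h2 := mul_pos (neg_pos.2 hxa) hcon
      unfold orient at h2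
      nlinarith
  rw [Finset.card_eq_one]
  refine ⟨(a, b), ?_⟩
  ext ⟨a', b'⟩
  simp only [Finset.mem_filter, Finset.mem_product, Finset.mem_singleton, Prod.mk.injEq]
  constructor
  · rintro ⟨⟨ha', hb'⟩, hxa', hxb', hall'⟩
    have e1 := mul_nonneg hxb'.le (neg_nonneg.2 (hall a' ha'))
    have e2 := mul_nonneg (neg_pos.2 hxa').le (neg_nonneg.2 (hall b' hb'))
    have e3 := mul_nonneg hxb.le (neg_nonneg.2 (hall' a ha))
    have e4 := mul_nonneg (neg_pos.2 hxa).le (neg_nonneg.2 (hall' b hb))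
    -- both lines meet `x = 0` at the same height, so the four nonnegative terms vanish
    have hsum : x b' * -orient x y a b a' + -x a' * -orient x y a b b' +
        (x b * -orient x y a' b' a + -x a * -orient x y a' b' b) = 0 := by
      unfold orient; ring
    have z1 : orient x y a b a' = 0 := by
      have : x b' * -orient x y a b a' = 0 := by linarith
      rcases mul_eq_zero.1 this with h | h <;> linarith
    have z2 : orient x y a b b' = 0 := by
      have : -x a' * -orient x y a b b' = 0 := by linarith
      rcases mul_eq_zero.1 this with h | h <;> linarith
    have hne : a ≠ b := by rintro rfl; linarith
    constructor
    · by_contra h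
      exact hgp a ha b hb a' ha' hne (Ne.symm h) (by rintro rfl; linarith) z1
    · by_contra h
      exact hgp a ha b hb b' hb' hne (by rintro rfl; linarith) (Ne.symm h) z2
  · rintro ⟨rfl, rfl⟩
    exact ⟨⟨ha, hb⟩, hxa, hxb, hall⟩

/-- Given at least `2 j + 1` pairwise non-parallel vectors `(x d, y d)`, at most `j` of them
outside the open upper half-plane, some `w` has exactly `j` of the others on its left. Among the vectors in the upper
half-plane, ordered by the slope `x / y`, the count rises by at most one from each to the next,
starts at most `j` and ends at least `j`. -/
lemma exists_level {ι : Type*} (P : Finset ι) (x y : ι → ℝ) (j : ℕ)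
    (hgp : ∀ w ∈ P, ∀ d ∈ P, w ≠ d → x w * y d - x d * y w ≠ 0)
    (hfew : (P.filter fun d => y d ≤ 0).card ≤ j) (hcard : 2 * j + 1 ≤ P.card) :
    ∃ w ∈ P, (P.filter fun d => 0 < x w * y d - x d * y w).card = j := by
  set A := P.filter fun d => y d ≤ 0 with hA
  set U := P.filter fun d => ¬ y d ≤ 0 with hU
  have hAU : A.card + U.card = P.card := by
    rw [hA, hU]; exact Finset.card_filter_add_card_filter_not _
  have memU : ∀ {d}, d ∈ U ↔ d ∈ P ∧ 0 < y d := by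
    intro d; rw [hU]; simp
  -- the count for `w`, split into the rank of `w` in `U` and the contribution of `A`
  have hsplit : ∀ w, (P.filter fun d => 0 < x w * y d - x d * y w).card =
      (A.filter fun d => 0 < x w * y d - x d * y w).card +
      (U.filter fun d => 0 < x w * y d - x d * y w).card := by
    intro w
    rw [← Finset.card_filter_add_card_filter_not (s := P.filter _) (fun d => y d ≤ 0),
      Finset.filter_comm, Finset.filter_comm (s := P) (q := fun d => ¬ y d ≤ 0)]
  have hdet : ∀ w ∈ U, ∀ d ∈ U, (0 < x w * y d - x d * y w ↔ x d / y d < x w / y w) := by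
    intro w hw d hd
    rw [div_lt_div_iff₀ (memU.1 hd).2 (memU.1 hw).2]
    constructor <;> intro h <;> linarith
  have hUne : U.Nonempty := by
    rw [← Finset.card_pos]; omega
  have hslope : ∀ w ∈ U, ∀ d ∈ U, w ≠ d → x w / y w ≠ x d / y d := by
    intro w hw d hd hwd h
    apply hgp w (memU.1 hw).1 d (memU.1 hd).1 hwd
    rw [div_eq_div_iff (memU.1 hw).2.ne' (memU.1 hd).2.ne'] at h
    linarith
  obtain ⟨top, htop, hmax⟩ := Finset.exists_max_image U (fun d => x d / y d) hUne
  have htopU : (U.filter fun d => 0 < x top * y d - x d * y top) = U.erase top := by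
    ext d
    simp only [Finset.mem_filter, Finset.mem_erase]
    constructor
    · rintro ⟨hd, h⟩
      refine ⟨?_, hd⟩
      rintro rfl
      linarith
    · rintro ⟨hne, hd⟩
      exact ⟨hd, (hdet top htop d hd).2 (lt_of_le_of_ne (hmax d hd) (hslope d hd top htop hne))⟩
  have htopj : j ≤ (P.filter fun d => 0 < x top * y d - x d * y top).card := by
    rw [hsplit, htopU, Finset.card_erase_of_mem htop]; omega
  obtain ⟨w, hw, hmin⟩ := Finset.exists_min_image
    (U.filter fun w => j ≤ (P.filter fun d => 0 < x w * y d - x d * y w).card)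
    (fun d => x d / y d) ⟨top, Finset.mem_filter.2 ⟨htop, htopj⟩⟩
  rw [Finset.mem_filter] at hw
  obtain ⟨hwU, hwj⟩ := hw
  refine ⟨w, (memU.1 hwU).1, le_antisymm ?_ hwj⟩
  rcases (U.filter fun d => 0 < x w * y d - x d * y w).eq_empty_or_nonempty with h0 | hL
  · rw [hsplit, h0, Finset.card_empty, add_zero]
    exact (Finset.card_filter_le _ _).trans hfew
  · obtain ⟨v, hv, hvmax⟩ := Finset.exists_max_image _ (fun d => x d / y d) hL
    rw [Finset.mem_filter] at hv
    obtain ⟨hvU, hvw⟩ := hv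
    have hlt := (hdet w hwU v hvU).1 hvw
    have hvj : (P.filter fun d => 0 < x v * y d - x d * y v).card < j := by
      by_contra hcon
      have := hmin v (Finset.mem_filter.2 ⟨hvU, not_lt.1 hcon⟩)
      linarith
    have h1 : (U.filter fun d => 0 < x w * y d - x d * y w) ⊆
        insert v (U.filter fun d => 0 < x v * y d - x d * y v) := by
      intro d hd
      rw [Finset.mem_insert, Finset.mem_filter]
      by_cases hdv : d = v
      · exact Or.inl hdv
      · have hdU := (Finset.mem_filter.1 hd).1
        exact Or.inr ⟨hdU, (hdet v hvU d hdU).2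
          (lt_of_le_of_ne (hvmax d hd) (hslope d hdU v hvU hdv))⟩
    have h2 : (A.filter fun d => 0 < x w * y d - x d * y w) ⊆
        A.filter fun d => 0 < x v * y d - x d * y v := by
      intro d hd
      rw [Finset.mem_filter] at hd ⊢
      refine ⟨hd.1, ?_⟩
      have hyd : y d ≤ 0 := (Finset.mem_filter.1 hd.1).2
      have hyw := (memU.1 hwU).2
      have hyv := (memU.1 hvU).2
      have e : y w * (x v * y d - x d * y v) =
          y v * (x w * y d - x d * y w) + -y d * (x w * y v - x v * y w) := by ring
      have : 0 < y w * (x v * y d - x d * y v) := by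
        rw [e]
        have := mul_pos hyv hd.2
        have := mul_nonneg (neg_nonneg.2 hyd) hvw.le
        linarith
      exact (pos_iff_pos_of_mul_pos this).1 hyw
    have c1 := (Finset.card_le_card h1).trans (Finset.card_insert_le _ _)
    have c2 := Finset.card_le_card h2
    rw [hsplit] at hvj ⊢
    omega

/-! ### The in-circle determinant and levels of oriented circles -/

/-- The in-circle determinant: the orientation determinant of the lifts of the four points to
the paraboloid `z = x² + y²`, in coordinates relative to `u`. -/
def inCirc (u v w d : Pt) : ℝ :=
  (v 0 - u 0) * ((w 1 - u 1) * ((d 0 - u 0) ^ 2 + (d 1 - u 1) ^ 2)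
      - ((w 0 - u 0) ^ 2 + (w 1 - u 1) ^ 2) * (d 1 - u 1))
    - (v 1 - u 1) * ((w 0 - u 0) * ((d 0 - u 0) ^ 2 + (d 1 - u 1) ^ 2)
      - ((w 0 - u 0) ^ 2 + (w 1 - u 1) ^ 2) * (d 0 - u 0))
    + ((v 0 - u 0) ^ 2 + (v 1 - u 1) ^ 2) *
      ((w 0 - u 0) * (d 1 - u 1) - (w 1 - u 1) * (d 0 - u 0))

lemma inCirc_rotate (u v w d : Pt) : inCirc u v w d = inCirc v w u d := by
  unfold inCirc; ring

lemma inCirc_swap (u v w d : Pt) : inCirc u w v d = -inCirc u v w d := by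
  unfold inCirc; ring

lemma inCirc_fst (u v w : Pt) : inCirc u v w u = 0 := by unfold inCirc; ring

lemma inCirc_snd (u v w : Pt) : inCirc u v w v = 0 := by unfold inCirc; ring

lemma inCirc_trd (u v w : Pt) : inCirc u v w w = 0 := by unfold inCirc; ring

/-- No four distinct points of `S` have coplanar lifts, that is, no four lie on a common circle
or line. -/
def GP (S : Finset Pt) : Prop :=
  ∀ u ∈ S, ∀ v ∈ S, ∀ w ∈ S, ∀ d ∈ S, u ≠ v → u ≠ w → u ≠ d → v ≠ w → v ≠ d → w ≠ d →
    inCirc u v w d ≠ 0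

lemma GP.erase {S : Finset Pt} (h : GP S) (p : Pt) : GP (S.erase p) := by
  intro u hu v hv w hw d hd
  exact h u (Finset.mem_of_mem_erase hu) v (Finset.mem_of_mem_erase hv)
    w (Finset.mem_of_mem_erase hw) d (Finset.mem_of_mem_erase hd)

/-- Ordered triples of distinct points of `S`. -/
def triples (S : Finset Pt) : Finset (Pt × Pt × Pt) :=
  (S ×ˢ S ×ˢ S).filter fun t => t.1 ≠ t.2.1 ∧ t.1 ≠ t.2.2 ∧ t.2.1 ≠ t.2.2

/-- The number of points of `S` strictly on the positive side of the oriented circle `t`. -/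
def level (S : Finset Pt) (t : Pt × Pt × Pt) : ℕ :=
  (S.filter fun d => 0 < inCirc t.1 t.2.1 t.2.2 d).card

/-- The number of ordered triples of level `j`. Each oriented `j`-facet of the lifted set is
counted three times, once for each cyclic rotation. -/
def numLevel (S : Finset Pt) (j : ℕ) : ℕ :=
  ((triples S).filter fun t => level S t = j).card

lemma mem_triples {S : Finset Pt} {u v w : Pt} : (u, v, w) ∈ triples S ↔
    (u ∈ S ∧ v ∈ S ∧ w ∈ S) ∧ u ≠ v ∧ u ≠ w ∧ v ≠ w := by
  simp [triples]

/-! ### Deleting a point -/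

lemma level_erase (S : Finset Pt) (t : Pt × Pt × Pt) (p : Pt) :
    level (S.erase p) t =
      ((S.filter fun d => 0 < inCirc t.1 t.2.1 t.2.2 d).erase p).card := by
  rw [level, Finset.filter_erase]

/-- Deleting a point off the circle `t` leaves `t` at level `j` precisely when `t` has level `j`
and the point is on the negative side, or `t` has level `j + 1` and the point is on the positive
side. -/
lemma card_erase_level {S : Finset Pt} (hS : GP S) (j : ℕ) {t : Pt × Pt × Pt}
    (ht : t ∈ triples S) :
    ((S.filter fun p => t ∈ triples (S.erase p) ∧ level (S.erase p) t = j).card : ℤ) =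
      (if level S t = j then (S.card - 3 - j : ℤ) else 0) +
      (if level S t = j + 1 then (j + 1 : ℤ) else 0) := by
  obtain ⟨u, v, w⟩ := t
  have ht' := mem_triples.1 ht
  obtain ⟨⟨hu, hv, hw⟩, huv, huw, hvw⟩ := ht'
  set pos := S.filter fun d => 0 < inCirc u v w d with hpos
  set neg := S.filter fun d => inCirc u v w d < 0 with hneg
  have hlev : level S (u, v, w) = pos.card := rfl
  have hmem : ∀ p, (u, v, w) ∈ triples (S.erase p) ↔ p ≠ u ∧ p ≠ v ∧ p ≠ w := by
    intro p
    rw [mem_triples]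
    simp only [Finset.mem_erase]
    constructor
    · rintro ⟨⟨h1, h2, h3⟩, _⟩
      exact ⟨h1.1.symm, h2.1.symm, h3.1.symm⟩
    · rintro ⟨h1, h2, h3⟩
      exact ⟨⟨⟨h1.symm, hu⟩, ⟨h2.symm, hv⟩, ⟨h3.symm, hw⟩⟩, huv, huw, hvw⟩
  have hposmem : ∀ p ∈ pos, p ≠ u ∧ p ≠ v ∧ p ≠ w := by
    intro p hp
    have := (Finset.mem_filter.1 hp).2
    refine ⟨?_, ?_, ?_⟩ <;> rintro rfl
    · rw [inCirc_fst] at this; exact lt_irrefl _ this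
    · rw [inCirc_snd] at this; exact lt_irrefl _ this
    · rw [inCirc_trd] at this; exact lt_irrefl _ this
  have hnegmem : ∀ p, p ∈ neg ↔ p ∈ S ∧ (p ≠ u ∧ p ≠ v ∧ p ≠ w) ∧ p ∉ pos := by
    intro p
    rw [hneg, hpos, Finset.mem_filter, Finset.mem_filter]
    constructor
    · rintro ⟨hp, h⟩
      refine ⟨hp, ⟨?_, ?_, ?_⟩, fun h' => lt_asymm h h'.2⟩ <;> rintro rfl
      · rw [inCirc_fst] at h; exact lt_irrefl _ h
      · rw [inCirc_snd] at h; exact lt_irrefl _ h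
      · rw [inCirc_trd] at h; exact lt_irrefl _ h
    · rintro ⟨hp, ⟨h1, h2, h3⟩, h⟩
      refine ⟨hp, lt_of_le_of_ne (not_lt.1 fun h' => h ⟨hp, h'⟩) ?_⟩
      exact hS u hu v hv w hw p hp huv huw h1.symm hvw h2.symm h3.symm
  have htot : pos.card + neg.card + 3 = S.card := by
    have h3 : ({u, v, w} : Finset Pt).card = 3 := Finset.card_eq_three.2 ⟨u, v, w, huv, huw, hvw, rfl⟩
    have hd1 : Disjoint pos neg := by
      rw [Finset.disjoint_left]; intro p hp hn
      exact ((hnegmem p).1 hn).2.2 hp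
    have hd2 : Disjoint (pos ∪ neg) {u, v, w} := by
      rw [Finset.disjoint_left]; intro p hp hn
      have : p ≠ u ∧ p ≠ v ∧ p ≠ w := by
        rcases Finset.mem_union.1 hp with h | h
        · exact hposmem p h
        · exact ((hnegmem p).1 h).2.1
      simp only [Finset.mem_insert, Finset.mem_singleton] at hn
      tauto
    rw [← h3, ← Finset.card_union_of_disjoint hd1, ← Finset.card_union_of_disjoint hd2]
    congr 1
    ext p
    simp only [Finset.mem_union, Finset.mem_insert, Finset.mem_singleton]
    constructor
    · rintro ((h | h) | rfl | rfl | rfl)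
      · exact (Finset.mem_filter.1 h).1
      · exact (Finset.mem_filter.1 h).1
      all_goals assumption
    · intro hp
      by_cases h : p ∈ pos
      · exact Or.inl (Or.inl h)
      · by_cases h' : p = u ∨ p = v ∨ p = w
        · exact Or.inr h'
        · push Not at h'
          exact Or.inl (Or.inr ((hnegmem p).2 ⟨hp, h', h⟩))
  have hlp : ∀ p ∈ pos, level (S.erase p) (u, v, w) + 1 = pos.card := by
    intro p hp
    rw [level_erase]
    exact Finset.card_erase_add_one hp
  have hln : ∀ p, p ∉ pos → level (S.erase p) (u, v, w) = pos.card := by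
    intro p hp
    rw [level_erase]
    exact congrArg Finset.card (Finset.erase_eq_of_notMem hp)
  rw [hlev]
  by_cases h1 : pos.card = j
  · have : (S.filter fun p => (u, v, w) ∈ triples (S.erase p) ∧
        level (S.erase p) (u, v, w) = j) = neg := by
      ext p
      rw [Finset.mem_filter, hmem, hnegmem]
      constructor
      · rintro ⟨hp, h, hl⟩
        refine ⟨hp, h, fun hpp => ?_⟩
        have := hlp p hpp
        omega
      · rintro ⟨hp, h, hl⟩
        exact ⟨hp, h, by rw [hln p hl, h1]⟩
    rw [this, if_pos h1, if_neg (by omega)]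
    omega
  · by_cases h2 : pos.card = j + 1
    · have : (S.filter fun p => (u, v, w) ∈ triples (S.erase p) ∧
          level (S.erase p) (u, v, w) = j) = pos := by
        ext p
        rw [Finset.mem_filter, hmem]
        constructor
        · rintro ⟨hp, h, hl⟩
          by_contra hpp
          have := hln p hpp
          omega
        · intro hp
          refine ⟨(Finset.mem_filter.1 hp).1, hposmem p hp, ?_⟩
          have := hlp p hp
          omega
      rw [this, if_neg h1, if_pos h2]
      omega
    · rw [if_neg h1, if_neg h2, Finset.filter_eq_empty_iff.2]
      · simp
      · rintro p hp ⟨h, hl⟩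
        by_cases hpp : p ∈ pos
        · have := hlp p hpp
          omega
        · have := hln p hpp
          omega

lemma sum_numLevel_erase {S : Finset Pt} (hS : GP S) (j : ℕ) :
    ∑ p ∈ S, (numLevel (S.erase p) j : ℤ) =
      (S.card - 3 - j : ℤ) * numLevel S j + (j + 1 : ℤ) * numLevel S (j + 1) := by
  have h1 : ∀ p ∈ S, numLevel (S.erase p) j = ((triples S).filter fun t =>
      t ∈ triples (S.erase p) ∧ level (S.erase p) t = j).card := by
    intro p _
    rw [numLevel]
    congr 1
    ext ⟨u, v, w⟩
    simp only [Finset.mem_filter]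
    constructor
    · rintro ⟨h, hl⟩
      refine ⟨?_, h, hl⟩
      rw [mem_triples] at h ⊢
      simp only [Finset.mem_erase] at h
      exact ⟨⟨h.1.1.2, h.1.2.1.2, h.1.2.2.2⟩, h.2⟩
    · rintro ⟨_, h⟩
      exact h
  have h2 : ∑ p ∈ S, numLevel (S.erase p) j = ∑ t ∈ triples S,
      (S.filter fun p => t ∈ triples (S.erase p) ∧ level (S.erase p) t = j).card := by
    rw [Finset.sum_congr rfl h1]
    exact Finset.sum_card_bipartiteAbove_eq_sum_card_bipartiteBelow
      (fun p t => t ∈ triples (S.erase p) ∧ level (S.erase p) t = j)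
  rw [← Nat.cast_sum, h2, Nat.cast_sum, Finset.sum_congr rfl fun t ht => card_erase_level hS j ht,
    Finset.sum_add_distrib, ← Finset.sum_filter, ← Finset.sum_filter,
    Finset.sum_const, Finset.sum_const, nsmul_eq_mul, nsmul_eq_mul, numLevel, numLevel]
  ring

/-! ### Level zero: hull facets of the lifted set -/

lemma level_eq_zero {S : Finset Pt} {t : Pt × Pt × Pt} :
    level S t = 0 ↔ ∀ d ∈ S, inCirc t.1 t.2.1 t.2.2 d ≤ 0 := by
  rw [level, Finset.card_eq_zero, Finset.filter_eq_empty_iff]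
  simp only [not_lt]

lemma sqdist_pos {p d : Pt} (h : d ≠ p) : 0 < (d 0 - p 0) ^ 2 + (d 1 - p 1) ^ 2 := by
  by_contra hcon
  apply h
  have h0 : d 0 - p 0 = 0 := by nlinarith [sq_nonneg (d 0 - p 0), sq_nonneg (d 1 - p 1)]
  have h1 : d 1 - p 1 = 0 := by nlinarith [sq_nonneg (d 0 - p 0), sq_nonneg (d 1 - p 1)]
  ext i
  fin_cases i
  · simpa using sub_eq_zero.1 h0
  · simpa using sub_eq_zero.1 h1

/-- Inversion at `p`, composed with a shear and a scaling by `e`, turns the in-circle determinant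
into an orientation, up to a positive factor. -/
lemma inCirc_eq_orient (c e : ℝ) {p q r d : Pt} (hq : q ≠ p) (hr : r ≠ p) (hd : d ≠ p) :
    e * inCirc p q r d =
      ((q 0 - p 0) ^ 2 + (q 1 - p 1) ^ 2) * ((r 0 - p 0) ^ 2 + (r 1 - p 1) ^ 2) *
      ((d 0 - p 0) ^ 2 + (d 1 - p 1) ^ 2) *
      orient (fun z : Pt => (z 0 + c * z 1 - (p 0 + c * p 1)) /
          ((z 0 - p 0) ^ 2 + (z 1 - p 1) ^ 2))
        (fun z : Pt => e * (z 1 - p 1) / ((z 0 - p 0) ^ 2 + (z 1 - p 1) ^ 2)) q r d := by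
  have hq' := (sqdist_pos hq).ne'
  have hr' := (sqdist_pos hr).ne'
  have hd' := (sqdist_pos hd).ne'
  unfold orient inCirc
  field_simp
  ring

/-- `bridge` applied after inversion at `p`. The factor `e = 1` selects the upper bridge and
`e = -1` the lower one. -/
lemma bridge_inCirc {S : Finset Pt} (hS : GP S) (c : ℝ) (e : ℝ) (he : e ≠ 0) {p : Pt}
    (hp : p ∈ S)
    (hinj : ∀ a ∈ S, ∀ b ∈ S, a 0 + c * a 1 = b 0 + c * b 1 → a = b)
    (hlt : ∃ a ∈ S, a 0 + c * a 1 < p 0 + c * p 1)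
    (hgt : ∃ b ∈ S, p 0 + c * p 1 < b 0 + c * b 1) :
    (((S.erase p) ×ˢ (S.erase p)).filter fun t : Pt × Pt =>
      t.1 0 + c * t.1 1 < p 0 + c * p 1 ∧ p 0 + c * p 1 < t.2 0 + c * t.2 1 ∧
      ∀ d ∈ S, e * inCirc p t.1 t.2 d ≤ 0).card = 1 := by
  obtain ⟨a, ha, hap⟩ := hlt
  obtain ⟨b, hb, hbp⟩ := hgt
  have hZ : ∀ z ∈ S.erase p, 0 < (z 0 - p 0) ^ 2 + (z 1 - p 1) ^ 2 := fun z hz =>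
    sqdist_pos (Finset.ne_of_mem_erase hz)
  have hxneg : ∀ z ∈ S.erase p, (z 0 + c * z 1 - (p 0 + c * p 1)) /
      ((z 0 - p 0) ^ 2 + (z 1 - p 1) ^ 2) < 0 ↔ z 0 + c * z 1 < p 0 + c * p 1 := by
    intro z hz
    rw [div_lt_iff₀ (hZ z hz), zero_mul, sub_neg]
  have hxpos : ∀ z ∈ S.erase p, 0 < (z 0 + c * z 1 - (p 0 + c * p 1)) /
      ((z 0 - p 0) ^ 2 + (z 1 - p 1) ^ 2) ↔ p 0 + c * p 1 < z 0 + c * z 1 := by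
    intro z hz
    rw [lt_div_iff₀ (hZ z hz), zero_mul, sub_pos]
  have ha' : a ∈ S.erase p := Finset.mem_erase.2 ⟨by rintro rfl; exact lt_irrefl _ hap, ha⟩
  have hb' : b ∈ S.erase p := Finset.mem_erase.2 ⟨by rintro rfl; exact lt_irrefl _ hbp, hb⟩
  have key := bridge (S.erase p)
    (fun z : Pt => (z 0 + c * z 1 - (p 0 + c * p 1)) / ((z 0 - p 0) ^ 2 + (z 1 - p 1) ^ 2))
    (fun z : Pt => e * (z 1 - p 1) / ((z 0 - p 0) ^ 2 + (z 1 - p 1) ^ 2))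
    (by
      intro z hz
      refine div_ne_zero (fun h => ?_) (hZ z hz).ne'
      exact Finset.ne_of_mem_erase hz
        (hinj z (Finset.mem_of_mem_erase hz) p hp (sub_eq_zero.1 h)))
    ⟨a, ha', (hxneg a ha').2 hap⟩ ⟨b, hb', (hxpos b hb').2 hbp⟩
    (by
      intro q hq r hr d hd hqr hqd hrd h0
      have := inCirc_eq_orient c e (Finset.ne_of_mem_erase hq) (Finset.ne_of_mem_erase hr)
        (Finset.ne_of_mem_erase hd)
      rw [h0, mul_zero] at this
      rcases mul_eq_zero.1 this with h | h
      · exact he h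
      · exact hS p hp q (Finset.mem_of_mem_erase hq) r (Finset.mem_of_mem_erase hr)
          d (Finset.mem_of_mem_erase hd) (Finset.ne_of_mem_erase hq).symm
          (Finset.ne_of_mem_erase hr).symm (Finset.ne_of_mem_erase hd).symm hqr hqd hrd h)
  refine Eq.trans ?_ key
  congr 1
  ext ⟨q, r⟩
  simp only [Finset.mem_filter, Finset.mem_product]
  refine and_congr_right ?_
  rintro ⟨hq, hr⟩
  rw [hxneg q hq, hxpos r hr]
  refine and_congr_right fun _ => and_congr_right fun _ => ?_
  have hiff : ∀ d ∈ S.erase p, (e * inCirc p q r d ≤ 0 ↔ orient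
      (fun z : Pt => (z 0 + c * z 1 - (p 0 + c * p 1)) / ((z 0 - p 0) ^ 2 + (z 1 - p 1) ^ 2))
      (fun z : Pt => e * (z 1 - p 1) / ((z 0 - p 0) ^ 2 + (z 1 - p 1) ^ 2)) q r d ≤ 0) := by
    intro d hd
    rw [inCirc_eq_orient c e (Finset.ne_of_mem_erase hq) (Finset.ne_of_mem_erase hr)
        (Finset.ne_of_mem_erase hd)]
    have hpos := mul_pos (mul_pos (hZ q hq) (hZ r hr)) (hZ d hd)
    exact ⟨fun h => nonpos_of_mul_nonpos_right h hpos,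
      fun h => mul_nonpos_of_nonneg_of_nonpos hpos.le h⟩
  constructor
  · intro h d hd
    exact (hiff d hd).1 (h d (Finset.mem_of_mem_erase hd))
  · intro h d hd
    by_cases hdp : d = p
    · rw [hdp, inCirc_fst, mul_zero]
    · exact (hiff d (Finset.mem_erase.2 ⟨hdp, hd⟩)).2 (h d (Finset.mem_erase.2 ⟨hdp, hd⟩))

/-- Each point that is extreme for the sweep order in neither direction is the middle vertex of
exactly two oriented hull facets of the lifted set. -/
lemma card_middle {S : Finset Pt} (hS : GP S) (c : ℝ) {p : Pt} (hp : p ∈ S)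
    (hinj : ∀ a ∈ S, ∀ b ∈ S, a 0 + c * a 1 = b 0 + c * b 1 → a = b)
    (hlt : ∃ a ∈ S, a 0 + c * a 1 < p 0 + c * p 1)
    (hgt : ∃ b ∈ S, p 0 + c * p 1 < b 0 + c * b 1) :
    ((triples S).filter fun t => t.1 = p ∧ level S t = 0 ∧
      ((t.2.1 0 + c * t.2.1 1 < p 0 + c * p 1 ∧ p 0 + c * p 1 < t.2.2 0 + c * t.2.2 1) ∨
       (t.2.2 0 + c * t.2.2 1 < p 0 + c * p 1 ∧ p 0 + c * p 1 < t.2.1 0 + c * t.2.1 1))).card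
      = 2 := by
  have h1 := bridge_inCirc hS c 1 one_ne_zero hp hinj hlt hgt
  have h2 := bridge_inCirc hS c (-1) (by norm_num) hp hinj hlt hgt
  obtain ⟨⟨q, r⟩, hqr⟩ := Finset.card_eq_one.1 h1
  obtain ⟨⟨q', r'⟩, hqr'⟩ := Finset.card_eq_one.1 h2
  have m1 : ∀ x y : Pt, (x ∈ S.erase p ∧ y ∈ S.erase p) ∧ (x 0 + c * x 1 < p 0 + c * p 1 ∧
      p 0 + c * p 1 < y 0 + c * y 1 ∧ ∀ d ∈ S, 1 * inCirc p x y d ≤ 0) ↔ x = q ∧ y = r := by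
    intro x y
    have := Finset.ext_iff.1 hqr (x, y)
    simpa only [Finset.mem_filter, Finset.mem_product, Finset.mem_singleton,
      Prod.mk.injEq] using this
  have m2 : ∀ x y : Pt, (x ∈ S.erase p ∧ y ∈ S.erase p) ∧ (x 0 + c * x 1 < p 0 + c * p 1 ∧
      p 0 + c * p 1 < y 0 + c * y 1 ∧ ∀ d ∈ S, -1 * inCirc p x y d ≤ 0) ↔ x = q' ∧ y = r' := by
    intro x y
    have := Finset.ext_iff.1 hqr' (x, y)
    simpa only [Finset.mem_filter, Finset.mem_product, Finset.mem_singleton,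
      Prod.mk.injEq] using this
  rw [Finset.card_eq_two]
  refine ⟨(p, q, r), (p, r', q'), ?_, ?_⟩
  · have e1 := (m1 q r).2 ⟨rfl, rfl⟩
    have e2 := (m2 q' r').2 ⟨rfl, rfl⟩
    intro h
    simp only [Prod.mk.injEq, true_and] at h
    rw [← h.1] at e2
    linarith [e1.2.1, e2.2.2.1]
  · ext ⟨u, v, w⟩
    simp only [Finset.mem_filter, Finset.mem_insert, Finset.mem_singleton, Prod.mk.injEq,
      mem_triples, level_eq_zero]
    constructor
    · rintro ⟨⟨⟨hu, hv, hw⟩, huv, huw, hvw⟩, rfl, hl, h | h⟩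
      · left
        refine ⟨rfl, (m1 v w).1 ⟨⟨Finset.mem_erase.2 ⟨huv.symm, hv⟩,
          Finset.mem_erase.2 ⟨huw.symm, hw⟩⟩, h.1, h.2, ?_⟩⟩
        simpa using hl
      · right
        have := (m2 w v).1 ⟨⟨Finset.mem_erase.2 ⟨huw.symm, hw⟩,
          Finset.mem_erase.2 ⟨huv.symm, hv⟩⟩, h.1, h.2, by
            intro d hd
            rw [inCirc_swap]
            simpa using hl d hd⟩
        exact ⟨rfl, this.2, this.1⟩
    · rintro (⟨rfl, rfl, rfl⟩ | ⟨rfl, rfl, rfl⟩)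
      · obtain ⟨⟨hv, hw⟩, h1, h2, h3⟩ := (m1 v w).2 ⟨rfl, rfl⟩
        rw [Finset.mem_erase] at hv hw
        refine ⟨⟨⟨hp, hv.2, hw.2⟩, hv.1.symm, hw.1.symm, ?_⟩, rfl, by simpa using h3,
          Or.inl ⟨h1, h2⟩⟩
        rintro rfl
        exact lt_asymm h1 h2
      · obtain ⟨⟨hw, hv⟩, h1, h2, h3⟩ := (m2 w v).2 ⟨rfl, rfl⟩
        rw [Finset.mem_erase] at hv hw
        refine ⟨⟨⟨hp, hv.2, hw.2⟩, hv.1.symm, hw.1.symm, ?_⟩, rfl, ?_, Or.inr ⟨h1, h2⟩⟩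
        · rintro rfl
          exact lt_asymm h1 h2
        · intro d hd
          have := h3 d hd
          rw [inCirc_swap] at this
          simpa using this

/-- The linear functional `x + c y` separates the points of `S` for all but finitely many `c`. -/
lemma exists_sweep (S : Finset Pt) :
    ∃ c : ℝ, ∀ a ∈ S, ∀ b ∈ S, a 0 + c * a 1 = b 0 + c * b 1 → a = b := by
  obtain ⟨c, hc⟩ := Infinite.exists_notMem_finset
    ((S ×ˢ S).image fun t : Pt × Pt => (t.1 0 - t.2 0) / (t.2 1 - t.1 1))
  refine ⟨c, fun a ha b hb h => ?_⟩
  by_contra hne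
  by_cases h1 : b 1 - a 1 = 0
  · apply hne
    have e1 : a 1 = b 1 := by linarith
    rw [e1] at h
    ext i
    fin_cases i
    · simpa using h
    · simpa using e1
  · apply hc
    rw [Finset.mem_image]
    refine ⟨(a, b), Finset.mem_product.2 ⟨ha, hb⟩, ?_⟩
    simp only
    rw [div_eq_iff h1]
    linarith

/-- The sweep argument for the number of hull facets of the lifted set: every facet has a middle
vertex, and every non-extreme vertex is the middle one of exactly two facets. -/
lemma numLevel_zero {S : Finset Pt} (hS : GP S) (hcard : 2 ≤ S.card) :
    (numLevel S 0 : ℤ) = 6 * (S.card - 2) := by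
  obtain ⟨c, hinj⟩ := exists_sweep S
  let f : Pt → ℝ := fun a => a 0 + c * a 1
  let T := (triples S).filter fun t => level S t = 0
  let btw : Pt → Pt → Pt → Prop := fun p q r => (f q < f p ∧ f p < f r) ∨ (f r < f p ∧ f p < f q)
  have hrot : ∀ u v w, (u, v, w) ∈ T ↔ (v, w, u) ∈ T := by
    intro u v w
    simp only [T, Finset.mem_filter, mem_triples, level_eq_zero]
    constructor
    · rintro ⟨⟨⟨hu, hv, hw⟩, huv, huw, hvw⟩, h⟩
      refine ⟨⟨⟨hv, hw, hu⟩, hvw, huv.symm, huw.symm⟩, fun d hd => ?_⟩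
      rw [← inCirc_rotate]; exact h d hd
    · rintro ⟨⟨⟨hv, hw, hu⟩, hvw, huv, huw⟩, h⟩
      refine ⟨⟨⟨hu, hv, hw⟩, huv.symm, huw.symm, hvw⟩, fun d hd => ?_⟩
      rw [inCirc_rotate]; exact h d hd
  -- the triples whose first, second, third entry is the middle one in the sweep order
  let T1 := T.filter fun t => btw t.1 t.2.1 t.2.2
  let T2 := T.filter fun t => btw t.2.1 t.2.2 t.1
  let T3 := T.filter fun t => btw t.2.2 t.1 t.2.1
  have h21 : T2.card = T1.card := by
    refine Finset.card_nbij' (fun t => (t.2.1, t.2.2, t.1)) (fun t => (t.2.2, t.1, t.2.1))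
      ?_ ?_ (fun _ _ => rfl) (fun _ _ => rfl)
    · rintro ⟨u, v, w⟩ h
      have h := Finset.mem_filter.1 h
      exact Finset.mem_filter.2 ⟨(hrot u v w).1 h.1, h.2⟩
    · rintro ⟨u, v, w⟩ h
      have h := Finset.mem_filter.1 h
      exact Finset.mem_filter.2 ⟨(hrot w u v).2 h.1, h.2⟩
  have h31 : T3.card = T1.card := by
    refine Finset.card_nbij' (fun t => (t.2.2, t.1, t.2.1)) (fun t => (t.2.1, t.2.2, t.1))
      ?_ ?_ (fun _ _ => rfl) (fun _ _ => rfl)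
    · rintro ⟨u, v, w⟩ h
      have h := Finset.mem_filter.1 h
      exact Finset.mem_filter.2 ⟨(hrot w u v).2 h.1, h.2⟩
    · rintro ⟨u, v, w⟩ h
      have h := Finset.mem_filter.1 h
      exact Finset.mem_filter.2 ⟨(hrot u v w).1 h.1, h.2⟩
  have hT : T.card = T1.card + T2.card + T3.card := by
    have hd1 : Disjoint T1 T2 := by
      rw [Finset.disjoint_left]
      rintro ⟨u, v, w⟩ h1 h2
      have h1 := (Finset.mem_filter.1 h1).2
      have h2 := (Finset.mem_filter.1 h2).2
      simp only [btw] at h1 h2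
      rcases h1 with h1 | h1 <;> rcases h2 with h2 | h2 <;> linarith
    have hd2 : Disjoint (T1 ∪ T2) T3 := by
      rw [Finset.disjoint_left]
      rintro ⟨u, v, w⟩ h1 h2
      have h2 := (Finset.mem_filter.1 h2).2
      rcases Finset.mem_union.1 h1 with h1 | h1 <;>
      · have h1 := (Finset.mem_filter.1 h1).2
        simp only [btw] at h1 h2
        rcases h1 with h1 | h1 <;> rcases h2 with h2 | h2 <;> linarith
    rw [← Finset.card_union_of_disjoint hd1, ← Finset.card_union_of_disjoint hd2]
    congr 1
    ext ⟨u, v, w⟩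
    simp only [Finset.mem_union, T1, T2, T3, Finset.mem_filter (s := T)]
    constructor
    · intro h
      have h' := mem_triples.1 (Finset.mem_filter.1 h).1
      obtain ⟨⟨hu, hv, hw⟩, huv, huw, hvw⟩ := h'
      have e1 : f u ≠ f v := fun h => huv (hinj u hu v hv h)
      have e2 : f u ≠ f w := fun h => huw (hinj u hu w hw h)
      have e3 : f v ≠ f w := fun h => hvw (hinj v hv w hw h)
      simp only [btw]
      rcases lt_or_gt_of_ne e1 with e1 | e1 <;> rcases lt_or_gt_of_ne e2 with e2 | e2 <;>
        rcases lt_or_gt_of_ne e3 with e3 | e3 <;> simp [h, e1, e2, e3]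
    · tauto
  have hT1 : T1.card = 2 * (S.card - 2) := by
    have hmaps : ∀ t ∈ T1, t.1 ∈ S := by
      rintro ⟨u, v, w⟩ h
      exact (mem_triples.1 (Finset.mem_filter.1 (Finset.mem_filter.1 h).1).1).1.1
    rw [Finset.card_eq_sum_card_fiberwise hmaps]
    have hne : S.Nonempty := Finset.card_pos.1 (by omega)
    obtain ⟨lo, hlo, hmin⟩ := Finset.exists_min_image S f hne
    obtain ⟨hi, hhi, hmax⟩ := Finset.exists_max_image S f hne
    have hlohi : lo ≠ hi := by
      rintro rfl
      obtain ⟨a, ha, b, hb, hab⟩ := Finset.one_lt_card.1 (by omega : 1 < S.card)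
      exact hab (hinj a ha b hb (by
        have := hmin a ha; have := hmin b hb; have := hmax a ha; have := hmax b hb
        change f a = f b
        linarith))
    have hin : ∀ p ∈ (S.erase lo).erase hi, (T1.filter fun t => t.1 = p).card = 2 := by
      intro p hp
      obtain ⟨hp1, hp2⟩ := Finset.mem_erase.1 hp
      obtain ⟨hp2, hp3⟩ := Finset.mem_erase.1 hp2
      refine Eq.trans ?_ (card_middle hS c hp3 hinj
        ⟨lo, hlo, lt_of_le_of_ne (hmin p hp3) fun h => hp2 (hinj lo hlo p hp3 h).symm⟩
        ⟨hi, hhi, lt_of_le_of_ne (hmax p hp3) fun h => hp1 (hinj p hp3 hi hhi h)⟩)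
      congr 1
      ext ⟨u, v, w⟩
      simp only [T1, T, btw, f, Finset.mem_filter]
      constructor
      · rintro ⟨⟨⟨h1, h2⟩, h3⟩, rfl⟩
        exact ⟨h1, rfl, h2, h3⟩
      · rintro ⟨h1, rfl, h2, h3⟩
        exact ⟨⟨⟨h1, h2⟩, h3⟩, rfl⟩
    have hzero : ∀ p, (p = lo ∨ p = hi) → (T1.filter fun t => t.1 = p).card = 0 := by
      intro p hp
      rw [Finset.card_eq_zero, Finset.filter_eq_empty_iff]
      rintro ⟨u, v, w⟩ h rfl
      obtain ⟨h1, h2⟩ := Finset.mem_filter.1 h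
      obtain ⟨⟨hu, hv, hw⟩, -⟩ := mem_triples.1 (Finset.mem_filter.1 h1).1
      simp only [btw] at h2 hp
      rcases hp with rfl | rfl
      · have := hmin v hv; have := hmin w hw
        rcases h2 with h2 | h2 <;> linarith
      · have := hmax v hv; have := hmax w hw
        rcases h2 with h2 | h2 <;> linarith
    have hhi' : hi ∈ S.erase lo := Finset.mem_erase.2 ⟨hlohi.symm, hhi⟩
    rw [← Finset.add_sum_erase S _ hlo, ← Finset.add_sum_erase (S.erase lo) _ hhi',
      hzero lo (Or.inl rfl), hzero hi (Or.inr rfl), Finset.sum_congr rfl hin,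
      Finset.sum_const, Finset.card_erase_of_mem hhi', Finset.card_erase_of_mem hlo, smul_eq_mul]
    omega
  have : numLevel S 0 = T.card := rfl
  rw [this, hT, h21, h31, hT1]
  push_cast [hcard]
  ring

/-! ### All levels -/

/-- The number of triples of level `j` depends only on the number of points: it is determined
recursively by `sum_numLevel_erase`, starting from level zero. -/
lemma numLevel_eq (j : ℕ) : ∀ S : Finset Pt, GP S → j + 2 ≤ S.card →
    (numLevel S j : ℤ) = 6 * (j + 1) * (S.card - 2 - j) := by
  induction j with
  | zero =>
    intro S hS hc
    rw [numLevel_zero hS (by omega)]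
    push_cast
    ring
  | succ j ih =>
    intro S hS hc
    have hrec := sum_numLevel_erase hS j
    have h1 : ∀ p ∈ S, (numLevel (S.erase p) j : ℤ) = 6 * (j + 1) * (S.card - 1 - 2 - j) := by
      intro p hp
      have hcard := Finset.card_erase_add_one hp
      rw [ih _ (hS.erase p) (by omega), ← hcard]
      push_cast
      ring
    rw [Finset.sum_congr rfl h1, Finset.sum_const, nsmul_eq_mul, ih S hS (by omega)] at hrec
    have hj : (j + 1 : ℤ) ≠ 0 := by positivity
    apply mul_left_cancel₀ hj
    push_cast
    linear_combination -hrec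

/-! ### Disks containing few points -/

/-- Squared Euclidean distance, in coordinates. -/
def sqd (a b : Pt) : ℝ := (a 0 - b 0) ^ 2 + (a 1 - b 1) ^ 2

lemma dist_eq_sqrt_sqd (a b : Pt) : dist a b = Real.sqrt (sqd a b) := by
  rw [EuclideanSpace.dist_eq, Fin.sum_univ_two, sqd, Real.dist_eq, Real.dist_eq, sq_abs, sq_abs]

/-- A disk containing `u` and `v` contains a disk with `u` and `v` on its boundary. -/
lemma exists_smaller_disk (u v c : Pt) (huv : u ≠ v) : ∃ c' : Pt, sqd u c' = sqd v c' ∧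
    ∀ d, sqd d c' ≤ sqd u c' → sqd d c ≤ max (sqd u c) (sqd v c) := by
  wlog h : sqd v c ≤ sqd u c generalizing u v
  · obtain ⟨c', h1, h2⟩ := this v u huv.symm (le_of_not_ge h)
    refine ⟨c', h1.symm, fun d hd => ?_⟩
    rw [max_comm]
    exact h2 d (h1 ▸ hd)
  -- `c'` is the point of the segment from `u` to `c` equidistant from `u` and `v`
  set K := (v 0 - u 0) * (c 0 - u 0) + (v 1 - u 1) * (c 1 - u 1) with hK
  have hZ : 0 < sqd v u := sqdist_pos huv.symm
  have hZK : sqd v u ≤ 2 * K := by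
    have : sqd v u - 2 * K = sqd v c - sqd u c := by rw [hK]; unfold sqd; ring
    linarith
  set s := sqd v u / (2 * K) with hs
  have hs0 : 0 < s := div_pos hZ (by linarith)
  have hs1 : s ≤ 1 := (div_le_one (by linarith)).2 hZK
  have hsK : s * (2 * K) = sqd v u := div_mul_cancel₀ _ (by linarith)
  refine ⟨!₂[u 0 + s * (c 0 - u 0), u 1 + s * (c 1 - u 1)], ?_, fun d hd => ?_⟩
  · rw [hK] at hsK
    unfold sqd at hsK ⊢
    simp only [Matrix.cons_val_zero, Matrix.cons_val_one]
    linear_combination hsK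
  · refine le_trans ?_ (le_max_left _ _)
    set I := (d 0 - u 0) * (c 0 - u 0) + (d 1 - u 1) * (c 1 - u 1) with hI
    have h1 : sqd d u ≤ 2 * (s * I) := by
      unfold sqd at hd ⊢
      simp only [Matrix.cons_val_zero, Matrix.cons_val_one] at hd
      rw [hI]
      linarith
    have h0 : 0 ≤ sqd d u := by unfold sqd; positivity
    have hI0 : 0 ≤ I := nonneg_of_mul_nonneg_right (by linarith : 0 ≤ s * I) hs0
    have h2 : sqd d u ≤ 2 * I := by nlinarith
    have : sqd d u - 2 * I = sqd d c - sqd u c := by rw [hI]; unfold sqd; ring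
    linarith

/-- A pair `u`, `v` lying in a disk with at most `j` further points is part of a triple `(u, v, w)`
of level exactly `j`, provided `S` has at least `2 j + 3` points. The lifted points are projected along the line through the lifts of `u` and
`v`, in coordinates in which a smaller disk with `u` and `v` on its boundary becomes the lower
half-plane, and `exists_level` is applied. -/
lemma exists_third {S : Finset Pt} (hS : GP S) {u v c : Pt} (hu : u ∈ S) (hv : v ∈ S)
    (huv : u ≠ v) {r : ℝ} (huc : dist u c ≤ r) (hvc : dist v c ≤ r) {j : ℕ}
    (hfew : (S.filter fun d => dist d c ≤ r).card ≤ j + 2) (hcard : 2 * j + 3 ≤ S.card) :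
    ∃ w, (u, v, w) ∈ triples S ∧ level S (u, v, w) = j := by
  obtain ⟨c', hc', hsub⟩ := exists_smaller_disk u v c huv
  set x : Pt → ℝ := fun d => (v 0 - u 0) * (d 1 - u 1) - (v 1 - u 1) * (d 0 - u 0) with hx
  set y : Pt → ℝ := fun d => sqd d c' - sqd u c' with hy
  have hdet : ∀ w d, inCirc u v w d = x w * y d - x d * y w := by
    intro w d
    simp only [hx, hy]
    unfold sqd at hc' ⊢
    unfold inCirc
    linear_combination (-((w 0 - u 0) * (d 1 - u 1) - (w 1 - u 1) * (d 0 - u 0))) * hc'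
  have hball : ∀ d, y d ≤ 0 → dist d c ≤ r := by
    intro d hd
    have h1 := hsub d (sub_nonpos.1 hd)
    have h2 : dist d c ≤ max (dist u c) (dist v c) := by
      rw [dist_eq_sqrt_sqd, dist_eq_sqrt_sqd, dist_eq_sqrt_sqd]
      rcases le_max_iff.1 h1 with h | h
      · exact le_max_of_le_left (Real.sqrt_le_sqrt h)
      · exact le_max_of_le_right (Real.sqrt_le_sqrt h)
    exact h2.trans (max_le huc hvc)
  set P := (S.erase u).erase v with hP
  have hvS : v ∈ S.erase u := Finset.mem_erase.2 ⟨huv.symm, hv⟩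
  have memP : ∀ {d}, d ∈ P ↔ d ≠ v ∧ d ≠ u ∧ d ∈ S := by
    intro d; simp [hP]
  have hPcard : P.card + 2 = S.card := by
    have h1 := Finset.card_erase_add_one hvS
    rw [← hP] at h1
    have h2 := Finset.card_erase_add_one hu
    omega
  have hPfew : (P.filter fun d => y d ≤ 0).card ≤ j := by
    have hsub : (P.filter fun d => y d ≤ 0) ⊆
        ((S.filter fun d => dist d c ≤ r).erase u).erase v := by
      intro d hd
      obtain ⟨hd1, hd2⟩ := Finset.mem_filter.1 hd
      obtain ⟨h1, h2, h3⟩ := memP.1 hd1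
      exact Finset.mem_erase.2 ⟨h1, Finset.mem_erase.2 ⟨h2, Finset.mem_filter.2
        ⟨h3, hball d hd2⟩⟩⟩
    have h0 := Finset.card_le_card hsub
    have h1 := Finset.card_erase_add_one (Finset.mem_filter.2 ⟨hu, huc⟩ :
      u ∈ S.filter fun d => dist d c ≤ r)
    have h2 := Finset.card_erase_add_one (Finset.mem_erase.2 ⟨huv.symm, Finset.mem_filter.2
      ⟨hv, hvc⟩⟩ : v ∈ (S.filter fun d => dist d c ≤ r).erase u)
    omega
  obtain ⟨w, hw, hwj⟩ := exists_level P x y j (by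
    intro w hw d hd hwd
    obtain ⟨h1, h2, h3⟩ := memP.1 hw
    obtain ⟨h4, h5, h6⟩ := memP.1 hd
    rw [← hdet]
    exact hS u hu v hv w h3 d h6 huv h2.symm h5.symm h1.symm h4.symm hwd) hPfew (by omega)
  obtain ⟨h1, h2, h3⟩ := memP.1 hw
  refine ⟨w, mem_triples.2 ⟨⟨hu, hv, h3⟩, huv, h2.symm, h1.symm⟩, ?_⟩
  rw [← hwj, level]
  congr 1
  ext d
  simp only [Finset.mem_filter, ← hdet]
  constructor
  · rintro ⟨hd, h⟩
    refine ⟨memP.2 ⟨?_, ?_, hd⟩, h⟩ <;> rintro rfl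
    · rw [inCirc_snd] at h; exact lt_irrefl _ h
    · rw [inCirc_fst] at h; exact lt_irrefl _ h
  · rintro ⟨hd, h⟩
    exact ⟨(memP.1 hd).2.2, h⟩

/-! ### General position and the bound -/

/-- Points at which the in-circle determinant vanishes lie on the circle through the
non-collinear points `u`, `v`, `w`; the centre is read off from the coefficients of the determinant. -/
lemma dist_center_of_inCirc_eq_zero {u v w p : Pt}
    (hα : (v 0 - u 0) * (w 1 - u 1) - (v 1 - u 1) * (w 0 - u 0) ≠ 0)
    (h : inCirc u v w p = 0) :
    let α := (v 0 - u 0) * (w 1 - u 1) - (v 1 - u 1) * (w 0 - u 0)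
    let c : Pt := !₂[u 0 - ((v 1 - u 1) * sqd w u - sqd v u * (w 1 - u 1)) / (2 * α),
      u 1 - (sqd v u * (w 0 - u 0) - (v 0 - u 0) * sqd w u) / (2 * α)]
    dist p c = dist u c := by
  intro α c
  have hα' : α ≠ 0 := hα
  rw [dist_eq_sqrt_sqd, dist_eq_sqrt_sqd]
  congr 1
  set b := ((v 1 - u 1) * sqd w u - sqd v u * (w 1 - u 1)) / (2 * α) with hb
  set g := (sqd v u * (w 0 - u 0) - (v 0 - u 0) * sqd w u) / (2 * α) with hg
  have hb' : b * (2 * α) = (v 1 - u 1) * sqd w u - sqd v u * (w 1 - u 1) :=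
    div_mul_cancel₀ _ (by simpa using hα')
  have hg' : g * (2 * α) = sqd v u * (w 0 - u 0) - (v 0 - u 0) * sqd w u :=
    div_mul_cancel₀ _ (by simpa using hα')
  have hc0 : c 0 = u 0 - b := rfl
  have hc1 : c 1 = u 1 - g := rfl
  apply mul_left_cancel₀ hα'
  have hin : inCirc u v w p = α * sqd p u +
      ((v 1 - u 1) * sqd w u - sqd v u * (w 1 - u 1)) * (p 0 - u 0) +
      (sqd v u * (w 0 - u 0) - (v 0 - u 0) * sqd w u) * (p 1 - u 1) := by
    simp only [α]; unfold inCirc sqd; ring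
  rw [h, ← hb', ← hg'] at hin
  unfold sqd at hin ⊢
  rw [hc0, hc1]
  linear_combination -hin

lemma GP_of_genPos {S : Finset Pt} (hS : GenPos (S : Set Pt)) : GP S := by
  intro u hu v hv w hw d hd huv huw hud hvw hvd hwd h0
  by_cases hα : (v 0 - u 0) * (w 1 - u 1) - (v 1 - u 1) * (w 0 - u 0) = 0
  · refine hS.1 {u, v, w} ?_ ?_ ?_
    · intro p hp
      rcases hp with rfl | rfl | rfl <;> assumption
    · exact Set.ncard_eq_three.2 ⟨u, v, w, huv, huw, hvw, rfl⟩
    · rw [collinear_iff_of_mem (p₀ := u) (by simp)]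
      refine ⟨v - u, ?_⟩
      have hZ : sqd v u ≠ 0 := (sqdist_pos huv.symm).ne'
      intro p hp
      rcases hp with rfl | rfl | rfl
      · exact ⟨0, by simp⟩
      · exact ⟨1, by simp⟩
      · refine ⟨((p 0 - u 0) * (v 0 - u 0) + (p 1 - u 1) * (v 1 - u 1)) / sqd v u, ?_⟩
        set s := ((p 0 - u 0) * (v 0 - u 0) + (p 1 - u 1) * (v 1 - u 1)) / sqd v u with hs
        have hs' : s * sqd v u = (p 0 - u 0) * (v 0 - u 0) + (p 1 - u 1) * (v 1 - u 1) :=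
          div_mul_cancel₀ _ hZ
        have e0 : p 0 = s * (v 0 - u 0) + u 0 := by
          apply mul_left_cancel₀ hZ
          have : sqd v u * (s * (v 0 - u 0)) = (s * sqd v u) * (v 0 - u 0) := by ring
          rw [mul_add, this, hs']
          unfold sqd
          linear_combination (-(v 1 - u 1)) * hα
        have e1 : p 1 = s * (v 1 - u 1) + u 1 := by
          apply mul_left_cancel₀ hZ
          have : sqd v u * (s * (v 1 - u 1)) = (s * sqd v u) * (v 1 - u 1) := by ring
          rw [mul_add, this, hs']
          unfold sqd
          linear_combination (v 0 - u 0) * hα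
        ext i
        fin_cases i
        · simpa using e0
        · simpa using e1
  · refine hS.2 {u, v, w, d} ?_ ?_ ?_
    · intro p hp
      rcases hp with rfl | rfl | rfl | rfl <;> assumption
    · have : ({u, v, w, d} : Set Pt) = (({u, v, w, d} : Finset Pt) : Set Pt) := by simp
      rw [this, Set.ncard_coe_finset]
      simp [*]
    · refine ⟨_, _, fun p hp => dist_center_of_inCirc_eq_zero hα ?_⟩
      rcases hp with rfl | rfl | rfl | rfl
      · exact inCirc_fst _ _ _
      · exact inCirc_snd _ _ _
      · exact inCirc_trd _ _ _
      · exact h0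

end Counting

/-- For every even `n ≥ 12` and every set of `n` points in the plane in general position
partitioned into `n/2` red points `R` and `n/2` blue points `B`, there exist a red point
`u ∈ R` and a blue point `v ∈ B` such that every closed disk containing both `u` and `v`
contains at least `⌈n/(6+√26)⌉ + 1` points of the set. -/
theorem pi_bichrom_lower_bound_n_over_11 (n : ℕ) (hn : 12 ≤ n) (heven : Even n)
    (R B : Set Pt) (hfinR : R.Finite) (hfinB : B.Finite) (hdisj : Disjoint R B)
    (hR : R.ncard = n / 2) (hB : B.ncard = n / 2) (hgp : GenPos (R ∪ B)) :
    ∃ u ∈ R, ∃ v ∈ B,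
      ∀ (c : Pt) (r : ℝ), 0 < r → u ∈ closedBall c r → v ∈ closedBall c r →
        ⌈(n : ℝ) / (6 + Real.sqrt 26)⌉ + 1 ≤
          (((R ∪ B) ∩ closedBall c r).ncard : ℤ) := by
  classical
  by_contra hcon
  push Not at hcon
  lift R to Finset Pt using hfinR
  lift B to Finset Pt using hfinB
  rw [Set.ncard_coe_finset] at hR hB
  rw [Finset.disjoint_coe] at hdisj
  obtain ⟨m, rfl⟩ := heven
  have hRm : R.card = m := by omega
  have hBm : B.card = m := by omega
  set S := R ∪ B with hSdef
  have hScoe : (R : Set Pt) ∪ B = (S : Set Pt) := by simp [hSdef]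
  rw [hScoe] at hgp hcon
  have hGP : GP S := GP_of_genPos hgp
  have hScard : S.card = m + m := by
    rw [hSdef, Finset.card_union_of_disjoint hdisj, hRm, hBm]
  -- `11 < 6 + √26 < 12`: the upper bound makes `k` at least `2`, the lower one gives
  -- `11 * (j + 1) < n`
  have hsq5 : (5 : ℝ) < Real.sqrt 26 := Real.lt_sqrt_of_sq_lt (by norm_num)
  have hsq6 : Real.sqrt 26 < 6 := (Real.sqrt_lt' (by norm_num)).2 (by norm_num)
  have hm : (12 : ℝ) ≤ ((m + m : ℕ) : ℝ) := by exact_mod_cast hn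
  set k := ⌈((m + m : ℕ) : ℝ) / (6 + Real.sqrt 26)⌉ with hk
  have hk1 : 1 < k := by
    rw [hk, Int.lt_ceil, lt_div_iff₀ (by linarith)]
    push_cast at hm ⊢
    linarith
  obtain ⟨j, hj⟩ : ∃ j : ℕ, k = j + 2 := ⟨(k - 2).toNat, by omega⟩
  have hjm : 11 * (j + 1) < m + m := by
    have h1 : ((k - 1 : ℤ) : ℝ) < ((m + m : ℕ) : ℝ) / (6 + Real.sqrt 26) := by
      rw [← Int.lt_ceil, ← hk]; omega
    rw [lt_div_iff₀ (by linarith), hj] at h1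
    have h2 : (11 : ℝ) * (j + 1) < ((m + m : ℕ) : ℝ) := by
      push_cast at h1 ⊢
      have : (0 : ℝ) ≤ j := Nat.cast_nonneg j
      nlinarith
    exact_mod_cast h2
  have hpair : ∀ u ∈ R, ∀ v ∈ B,
      (∃ w, (u, v, w) ∈ triples S ∧ level S (u, v, w) = j) ∧
      (∃ w, (v, u, w) ∈ triples S ∧ level S (v, u, w) = j) := by
    intro u hu v hv
    obtain ⟨c, r, -, huc, hvc, hlt⟩ := hcon u hu v hv
    have huS : u ∈ S := Finset.mem_union_left _ hu
    have hvS : v ∈ S := Finset.mem_union_right _ hv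
    have huv : u ≠ v := by
      rintro rfl
      exact Finset.disjoint_left.1 hdisj hu hv
    have hset : (S : Set Pt) ∩ closedBall c r =
        ((S.filter fun d => dist d c ≤ r : Finset Pt) : Set Pt) := by
      ext d; simp
    rw [hset, Set.ncard_coe_finset] at hlt
    rw [mem_closedBall] at huc hvc
    exact ⟨exists_third hGP huS hvS huv huc hvc (by omega) (by omega),
      exists_third hGP hvS huS huv.symm hvc huc (by omega) (by omega)⟩
  -- distinct ordered red-blue pairs extend to distinct triples of level `j`
  have hle : (R ×ˢ B ∪ B ×ˢ R).card ≤ numLevel S j := by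
    rw [numLevel]
    refine le_trans (Finset.card_le_card ?_)
      (Finset.card_image_le (f := fun t : Pt × Pt × Pt => (t.1, t.2.1)))
    rintro ⟨u, v⟩ h
    rw [Finset.mem_image]
    rcases Finset.mem_union.1 h with h | h
    · obtain ⟨hu, hv⟩ := Finset.mem_product.1 h
      obtain ⟨w, hw⟩ := (hpair u hu v hv).1
      exact ⟨(u, v, w), Finset.mem_filter.2 hw, rfl⟩
    · obtain ⟨hu, hv⟩ := Finset.mem_product.1 h
      obtain ⟨w, hw⟩ := (hpair v hv u hu).2
      exact ⟨(u, v, w), Finset.mem_filter.2 hw, rfl⟩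
  have hdisj2 : Disjoint (R ×ˢ B) (B ×ˢ R) := by
    rw [Finset.disjoint_left]
    rintro ⟨u, v⟩ h1 h2
    exact Finset.disjoint_left.1 hdisj (Finset.mem_product.1 h1).1 (Finset.mem_product.1 h2).1
  rw [Finset.card_union_of_disjoint hdisj2, Finset.card_product, Finset.card_product, hRm,
    hBm] at hle
  have hcount := numLevel_eq j S hGP (by omega)
  rw [hScard] at hcount
  zify at hle hjm
  rw [hcount] at hle
  push_cast at hle
  -- with `s = j + 1` and `N = 2m`: `N² - 12 s (N - s) = (N - 11 s) (N - s) + s²`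
  nlinarith [mul_nonneg (by linarith : (0 : ℤ) ≤ m + m - 11 * (j + 1))
    (by linarith : (0 : ℤ) ≤ m + m - (j + 1))]
end
end

section
/- For every even integer n ≥ 28, every set S of n points in the Euclidean plane in general position partitioned into a set R of n/2 red points and a set B of n/2 blue points, and every positive integer k with k < n/(14+2√43), there exist a red point u ∈ R and a blue point v ∈ B such that every closed disk having both u and v on its boundary contains at least k points of S in its open interior and leaves at least k points of S strictly outside the closed disk. -/
open EuclideanGeometry Metric

noncomputable section

/-! ### Circle equations and general position -/

/-- The quadratic function `s |q|² + p q₀ + m q₁ + d`; its zero set is a circle when `s ≠ 0`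
(and it has a zero), and a line when `s = 0` and `(p, m) ≠ 0`. -/
def circFn (s p m d : ℝ) (q : Pt) : ℝ :=
  s * (q 0 ^ 2 + q 1 ^ 2) + p * q 0 + m * q 1 + d

lemma dist_sq_eq (x y : Pt) : dist x y ^ 2 = (x 0 - y 0) ^ 2 + (x 1 - y 1) ^ 2 := by
  rw [EuclideanSpace.dist_eq, Real.sq_sqrt (by positivity)]
  simp [Real.dist_eq, sq_abs]

lemma GenPos.not_four {S : Set Pt} (hS : GenPos S) {s p m d : ℝ} (hs : s ≠ 0)
    {a b c e : Pt} (ha : a ∈ S) (hb : b ∈ S) (hc : c ∈ S) (he : e ∈ S)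
    (hab : a ≠ b) (hac : a ≠ c) (hae : a ≠ e) (hbc : b ≠ c) (hbe : b ≠ e) (hce : c ≠ e)
    (fa : circFn s p m d a = 0) (fb : circFn s p m d b = 0) (fc : circFn s p m d c = 0)
    (fe : circFn s p m d e = 0) : False := by
  classical
  refine hS.2 {a, b, c, e} ?_ ?_ ?_
  · intro x hx
    simp only [Set.mem_insert_iff, Set.mem_singleton_iff] at hx
    rcases hx with rfl | rfl | rfl | rfl <;> assumption
  · have : ({a, b, c, e} : Set Pt) = (({a, b, c, e} : Finset Pt) : Set Pt) := by simp
    rw [this, Set.ncard_coe_finset, Finset.card_insert_of_notMem (by simp [*]),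
      Finset.card_insert_of_notMem (by simp [*]), Finset.card_insert_of_notMem (by simp [*]),
      Finset.card_singleton]
  · refine ⟨!₂[-p / (2 * s), -m / (2 * s)],
      Real.sqrt ((p / (2 * s)) ^ 2 + (m / (2 * s)) ^ 2 - d / s), ?_⟩
    have key : ∀ x : Pt, circFn s p m d x = 0 →
        dist x !₂[-p / (2 * s), -m / (2 * s)] =
          Real.sqrt ((p / (2 * s)) ^ 2 + (m / (2 * s)) ^ 2 - d / s) := by
      intro x hx
      rw [← Real.sqrt_sq (dist_nonneg (x := x)), dist_sq_eq]
      congr 1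
      have : x 0 ^ 2 + x 1 ^ 2 = - (p * x 0 + m * x 1 + d) / s := by
        rw [eq_div_iff hs]; unfold circFn at hx; linarith
      have h2 : (x 0 - -p / (2 * s)) ^ 2 + (x 1 - -m / (2 * s)) ^ 2 =
          (x 0 ^ 2 + x 1 ^ 2) + (p * x 0 + m * x 1) / s + (p / (2 * s)) ^ 2
            + (m / (2 * s)) ^ 2 := by
        field_simp; ring
      simp only [Matrix.cons_val_zero, Matrix.cons_val_one]
      change (x 0 - -p / (2 * s)) ^ 2 + (x 1 - -m / (2 * s)) ^ 2 = _
      rw [h2, this]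
      field_simp; ring
    intro x hx
    simp only [Set.mem_insert_iff, Set.mem_singleton_iff] at hx
    rcases hx with rfl | rfl | rfl | rfl <;> exact key _ (by assumption)

/-- Twice the signed area of the triangle `u v q`; a `circFn` with `s = 0`. -/
def area (u v q : Pt) : ℝ := (v 0 - u 0) * (q 1 - u 1) - (v 1 - u 1) * (q 0 - u 0)

lemma GenPos.area_ne_zero {S : Set Pt} (hS : GenPos S) {u v q : Pt} (hu : u ∈ S) (hv : v ∈ S)
    (hq : q ∈ S) (huv : u ≠ v) (huq : u ≠ q) (hvq : v ≠ q) : area u v q ≠ 0 := by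
  classical
  intro h
  refine hS.1 {u, v, q} ?_ ?_ ?_
  · intro x hx
    simp only [Set.mem_insert_iff, Set.mem_singleton_iff] at hx
    rcases hx with rfl | rfl | rfl <;> assumption
  · exact Set.ncard_eq_three.2 ⟨u, v, q, huv, huq, hvq, rfl⟩
  · have hne : (v 0 - u 0) ^ 2 + (v 1 - u 1) ^ 2 ≠ 0 := by
      rw [← dist_sq_eq]
      exact pow_ne_zero _ (dist_ne_zero.2 huv.symm)
    rw [collinear_iff_of_mem (p₀ := u) (by simp)]
    refine ⟨v - u, ?_⟩
    intro x hx
    simp only [Set.mem_insert_iff, Set.mem_singleton_iff] at hx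
    rcases hx with rfl | rfl | rfl
    · exact ⟨0, by simp⟩
    · exact ⟨1, by simp⟩
    · refine ⟨((x 0 - u 0) * (v 0 - u 0) + (x 1 - u 1) * (v 1 - u 1)) /
        ((v 0 - u 0) ^ 2 + (v 1 - u 1) ^ 2), ?_⟩
      unfold area at h
      ext i
      fin_cases i
      · simp only [vadd_eq_add, PiLp.add_apply, PiLp.smul_apply, PiLp.sub_apply, smul_eq_mul,
          Fin.zero_eta]
        field_simp
        linear_combination (-(v 1 - u 1)) * h
      · simp only [vadd_eq_add, PiLp.add_apply, PiLp.smul_apply, PiLp.sub_apply, smul_eq_mul,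
          Fin.mk_one]
        field_simp
        linear_combination (v 0 - u 0) * h

/-! ### Rotating a circle in a pencil -/

/-- Discrete intermediate value principle for the pencil `α + t β`: starting at `t = 0` with fewer
than `k` negative values and increasing `t`, the points with `β < 0` become negative one at a time,
and if there are at least `k` of those, one of them becomes negative when exactly `k - 1` other
values are negative. -/
lemma exists_pencil_aux {ι : Type*} (Q : Finset ι) (α β : ι → ℝ) (k : ℕ)
    (hβ : ∀ q ∈ Q, β q ≠ 0)
    (hdist : ∀ q ∈ Q, ∀ q' ∈ Q, ∀ t, α q + t * β q = 0 → α q' + t * β q' = 0 → q = q')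
    (h0 : (Q.filter (fun q => α q < 0)).card < k)
    (hk : k ≤ (Q.filter (fun q => β q < 0)).card) :
    ∃ w ∈ Q, ∃ t, α w + t * β w = 0 ∧ (Q.filter (fun q => α q + t * β q < 0)).card + 1 = k := by
  classical
  -- `τ q` is the parameter at which the member of the pencil passes through `q`.
  set τ : ι → ℝ := fun q => -α q / β q with hτ
  set f : ℝ → ℕ := fun t => (Q.filter (fun q => α q + t * β q < 0)).card with hf
  set E := Q.filter (fun q => β q < 0) with hE
  have hz : ∀ q ∈ Q, α q + τ q * β q = 0 := by
    intro q hq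
    have := hβ q hq
    simp only [hτ]; field_simp; ring
  have hαE : ∀ q ∈ E, ∀ t, (α q + t * β q < 0 ↔ τ q < t) := by
    intro q hq t
    have hq' := (Finset.mem_filter.1 hq)
    have h1 := hz q hq'.1
    have h2 := hq'.2
    constructor
    · intro h; nlinarith
    · intro h; nlinarith
  have hEQ : E ⊆ Q := Finset.filter_subset _ _
  have hinj : ∀ q ∈ E, ∀ q' ∈ E, τ q = τ q' → q = q' := by
    intro q hq q' hq' h
    exact hdist q (hEQ hq) q' (hEQ hq') (τ q) (hz q (hEQ hq)) (h ▸ hz q' (hEQ hq'))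
  have hpos : ∀ q ∈ Q, q ∉ E → 0 < β q := by
    intro q hq hq'
    have : ¬ β q < 0 := fun h => hq' (Finset.mem_filter.2 ⟨hq, h⟩)
    exact lt_of_le_of_ne (not_lt.1 this) (hβ q hq).symm
  set Elate := E.filter (fun q => 0 ≤ τ q ∧ k ≤ f (τ q) + 1) with hElate
  -- The last point of `E` to become negative belongs to `Elate`.
  have hne : Elate.Nonempty := by
    have hEne : E.Nonempty := Finset.card_pos.1 (by omega)
    obtain ⟨w, hw, hmax⟩ := Finset.exists_max_image E τ hEne
    refine ⟨w, Finset.mem_filter.2 ⟨hw, ?_, ?_⟩⟩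
    · by_contra hneg
      push Not at hneg
      have : E ⊆ Q.filter (fun q => α q < 0) := by
        intro q hq
        refine Finset.mem_filter.2 ⟨hEQ hq, ?_⟩
        have := (hαE q hq 0).2 (lt_of_le_of_lt (hmax q hq) hneg)
        linarith
      have := Finset.card_le_card this
      omega
    · have : E.erase w ⊆ Q.filter (fun q => α q + τ w * β q < 0) := by
        intro q hq
        have hqE := Finset.mem_of_mem_erase hq
        refine Finset.mem_filter.2 ⟨hEQ hqE, (hαE q hqE _).2 ?_⟩
        refine lt_of_le_of_ne (hmax q hqE) fun h => ?_
        exact Finset.ne_of_mem_erase hq (hinj q hqE w hw h)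
      have := Finset.card_le_card this
      rw [Finset.card_erase_of_mem hw] at this
      simp only [hf]
      omega
  obtain ⟨w, hw, hmin⟩ := Finset.exists_min_image Elate τ hne
  obtain ⟨hwE, hw0, hwk⟩ := Finset.mem_filter.1 hw
  refine ⟨w, hEQ hwE, τ w, hz w (hEQ hwE), ?_⟩
  change f (τ w) + 1 = k
  by_contra hcon
  have hfk : k ≤ f (τ w) := by omega
  set pre := E.filter (fun q => 0 ≤ τ q ∧ τ q < τ w) with hpre
  rcases pre.eq_empty_or_nonempty with hemp | hprene
  · have : Q.filter (fun q => α q + τ w * β q < 0) ⊆ Q.filter (fun q => α q < 0) := by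
      intro q hq
      obtain ⟨hqQ, hq1⟩ := Finset.mem_filter.1 hq
      refine Finset.mem_filter.2 ⟨hqQ, ?_⟩
      by_cases hqE : q ∈ E
      · have h1 := (hαE q hqE _).1 hq1
        have h2 : ¬ 0 ≤ τ q := by
          intro h
          have : q ∈ pre := Finset.mem_filter.2 ⟨hqE, h, h1⟩
          simp [hemp] at this
        have := (hαE q hqE 0).2 (not_le.1 h2)
        linarith
      · have := hpos q hqQ hqE
        nlinarith
    have := Finset.card_le_card this
    simp only [hf] at hfk
    omega
  · obtain ⟨w', hw', hmax⟩ := Finset.exists_max_image pre τ hprene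
    obtain ⟨hw'E, hw'0, hw'w⟩ := Finset.mem_filter.1 hw'
    have : Q.filter (fun q => α q + τ w * β q < 0) ⊆
        insert w' (Q.filter (fun q => α q + τ w' * β q < 0)) := by
      intro q hq
      obtain ⟨hqQ, hq1⟩ := Finset.mem_filter.1 hq
      rw [Finset.mem_insert]
      by_cases hqE : q ∈ E
      · have h1 := (hαE q hqE _).1 hq1
        by_cases hqw : q = w'
        · exact Or.inl hqw
        right
        refine Finset.mem_filter.2 ⟨hqQ, (hαE q hqE _).2 ?_⟩
        by_cases h2 : 0 ≤ τ q
        · refine lt_of_le_of_ne (hmax q (Finset.mem_filter.2 ⟨hqE, h2, h1⟩)) fun h => ?_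
          exact hqw (hinj q hqE w' hw'E h)
        · linarith
      · right
        have := hpos q hqQ hqE
        exact Finset.mem_filter.2 ⟨hqQ, by nlinarith⟩
    have := (Finset.card_le_card this).trans (Finset.card_insert_le _ _)
    have hw_late : w' ∈ Elate := by
      refine Finset.mem_filter.2 ⟨hw'E, hw'0, ?_⟩
      simp only [hf] at hfk ⊢
      omega
    have := hmin w' hw_late
    linarith

/-- As `exists_pencil_aux`; one of the two directions of the pencil has at least `k` points
that become negative. -/
lemma exists_pencil {ι : Type*} (Q : Finset ι) (α β : ι → ℝ) (k : ℕ)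
    (hβ : ∀ q ∈ Q, β q ≠ 0)
    (hdist : ∀ q ∈ Q, ∀ q' ∈ Q, ∀ t, α q + t * β q = 0 → α q' + t * β q' = 0 → q = q')
    (h0 : (Q.filter (fun q => α q < 0)).card < k) (hk : 2 * k ≤ Q.card) :
    ∃ w ∈ Q, ∃ t, α w + t * β w = 0 ∧ (Q.filter (fun q => α q + t * β q < 0)).card + 1 = k := by
  classical
  by_cases hc : k ≤ (Q.filter (fun q => β q < 0)).card
  · exact exists_pencil_aux Q α β k hβ hdist h0 hc
  · have hsub : Q.filter (fun q => ¬ β q < 0) ⊆ Q.filter (fun q => (-β q) < 0) := by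
      intro q hq
      obtain ⟨h1, h2⟩ := Finset.mem_filter.1 hq
      refine Finset.mem_filter.2 ⟨h1, ?_⟩
      have := lt_of_le_of_ne (not_lt.1 h2) (hβ q h1).symm
      linarith
    have h1 := Finset.card_le_card hsub
    have h2 := Finset.card_filter_add_card_filter_not (s := Q) (fun q => β q < 0)
    obtain ⟨w, hw, t, ht, hcard⟩ := exists_pencil_aux Q α (fun q => -β q) k
      (fun q hq => neg_ne_zero.2 (hβ q hq))
      (fun q hq q' hq' t h h' => hdist q hq q' hq' (-t) (by linarith) (by linarith))
      h0 (by omega)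
    refine ⟨w, hw, -t, by linarith, ?_⟩
    simpa only [mul_neg, neg_mul] using hcard

/-- The three points lie on a circle with exactly `k - 1` points of `S` strictly on one side.
Since the sign of `s` is free, the side `circFn < 0` may be the interior or the exterior. -/
def IsKTriple (S : Finset Pt) (k : ℕ) (u v w : Pt) : Prop :=
  ∃ s p m d : ℝ, s ≠ 0 ∧ circFn s p m d u = 0 ∧ circFn s p m d v = 0 ∧ circFn s p m d w = 0 ∧
    (S.filter (fun q => circFn s p m d q < 0)).card + 1 = k

lemma exists_isKTriple_of_lt {S : Finset Pt} (hS : GenPos (S : Set Pt)) {k : ℕ}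
    (hk : 2 * k + 2 ≤ S.card) {u v : Pt} (hu : u ∈ S) (hv : v ∈ S) (huv : u ≠ v)
    {s p m d : ℝ} (hs : s ≠ 0) (fu : circFn s p m d u = 0) (fv : circFn s p m d v = 0)
    (hlt : (S.filter (fun q => circFn s p m d q < 0)).card < k) :
    ∃ w ∈ S, w ≠ u ∧ w ≠ v ∧ IsKTriple S k u v w := by
  classical
  set Q := (S.erase u).erase v with hQ
  have hmem : ∀ q, q ∈ Q ↔ q ≠ v ∧ q ≠ u ∧ q ∈ S := by
    intro q; simp [hQ, Finset.mem_erase]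
  have hcardQ : Q.card + 2 = S.card := by
    rw [hQ, Finset.card_erase_of_mem (Finset.mem_erase.2 ⟨huv.symm, hv⟩),
      Finset.card_erase_of_mem hu]
    omega
  have hpencil : ∀ t q, circFn s p m d q + t * area u v q =
      circFn s (p - t * (v 1 - u 1)) (m + t * (v 0 - u 0))
        (d + t * (- (v 0 - u 0) * u 1 + (v 1 - u 1) * u 0)) q := by
    intro t q; unfold circFn area; ring
  have au : area u v u = 0 := by unfold area; ring
  have av : area u v v = 0 := by unfold area; ring
  obtain ⟨w, hw, t, hwt, hcard⟩ := exists_pencil Q (circFn s p m d) (area u v) k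
    (fun q hq => by
      obtain ⟨h1, h2, h3⟩ := (hmem q).1 hq
      exact hS.area_ne_zero hu hv h3 huv h2.symm h1.symm)
    (fun q hq q' hq' t h h' => by
      obtain ⟨h1, h2, h3⟩ := (hmem q).1 hq
      obtain ⟨h1', h2', h3'⟩ := (hmem q').1 hq'
      by_contra hne
      rw [hpencil] at h h'
      refine hS.not_four hs hu hv h3 h3' huv h2.symm h2'.symm h1.symm h1'.symm hne ?_ ?_ h h'
      · rw [← hpencil, fu, au]; ring
      · rw [← hpencil, fv, av]; ring)
    (lt_of_le_of_lt (Finset.card_le_card (Finset.filter_subset_filter _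
      ((Finset.erase_subset _ _).trans (Finset.erase_subset _ _)))) hlt)
    (by omega)
  obtain ⟨h1, h2, h3⟩ := (hmem w).1 hw
  refine ⟨w, h3, h2, h1, s, _, _, _, hs, ?_, ?_, (hpencil t w).symm.trans hwt, ?_⟩
  · rw [← hpencil, fu, au]; ring
  · rw [← hpencil, fv, av]; ring
  · rw [← hcard]
    congr 2
    ext q
    simp only [Finset.mem_filter, hmem, ← hpencil]
    constructor
    · rintro ⟨hq, hneg⟩
      refine ⟨⟨?_, ?_, hq⟩, hneg⟩
      · rintro rfl; rw [fv, av] at hneg; linarith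
      · rintro rfl; rw [fu, au] at hneg; linarith
    · rintro ⟨⟨_, _, hq⟩, hneg⟩
      exact ⟨hq, hneg⟩

/-! ### Counting triples by their middle point -/

/-- The equation of a circle through `v` in coordinates centred at `v`, with the linear
coordinates `q 0 + ε q 1` and `q 1`. -/
def vFn (ε : ℝ) (v : Pt) (y x σ : ℝ) (q : Pt) : ℝ :=
  y * ((q 0 - v 0) ^ 2 + (q 1 - v 1) ^ 2) + x * ((q 0 + ε * q 1) - (v 0 + ε * v 1))
    + σ * (q 1 - v 1)

lemma vFn_eq_circFn (ε : ℝ) (v : Pt) (y x σ : ℝ) : ∃ p m d : ℝ, ∀ q,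
    vFn ε v y x σ q = circFn y p m d q :=
  ⟨x - 2 * y * v 0, x * ε + σ - 2 * y * v 1,
    y * (v 0 ^ 2 + v 1 ^ 2) - x * (v 0 + ε * v 1) - σ * v 1,
    fun q => by unfold vFn circFn; ring⟩

/-- A circle through `v` and through points on both sides of the line `g = g v` (where
`g q = q 0 + ε q 1`) is not tangent to that line at `v`, so its equation can be normalised to have
last coefficient `±1`. -/
lemma IsKTriple.normalise {S : Finset Pt} {k : ℕ} {v a b : Pt} (h : IsKTriple S k v a b) (ε : ℝ)
    (ha : v 0 + ε * v 1 < a 0 + ε * a 1) (hb : b 0 + ε * b 1 < v 0 + ε * v 1) :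
    ∃ y x σ : ℝ, y ≠ 0 ∧ (σ = 1 ∨ σ = -1) ∧ vFn ε v y x σ a = 0 ∧ vFn ε v y x σ b = 0 ∧
      (S.filter (fun q => vFn ε v y x σ q < 0)).card + 1 = k := by
  obtain ⟨s, p, m, d, hs, fv, fa, fb, hcard⟩ := h
  set p' := p + 2 * s * v 0 with hp'
  set m' := m + 2 * s * v 1 - ε * p' with hm'
  have hform : ∀ q, circFn s p m d q = vFn ε v s p' m' q := by
    intro q
    have : circFn s p m d q = circFn s p m d q - circFn s p m d v := by rw [fv]; ring
    rw [this, hm', hp']; unfold vFn circFn; ring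
  rw [hform] at fa fb
  have hm0 : m' ≠ 0 := by
    intro h0
    rw [h0] at fa fb
    unfold vFn at fa fb
    set da := (a 0 - v 0) ^ 2 + (a 1 - v 1) ^ 2 with hda
    set db := (b 0 - v 0) ^ 2 + (b 1 - v 1) ^ 2 with hdb
    set ga := (a 0 + ε * a 1) - (v 0 + ε * v 1) with hga
    set gb := (b 0 + ε * b 1) - (v 0 + ε * v 1) with hgb
    have hga0 : 0 < ga := by linarith
    have hgb0 : gb < 0 := by linarith
    have hda0 : 0 < da := by
      rw [hda, ← dist_sq_eq]
      refine pow_pos (dist_pos.2 ?_) 2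
      rintro rfl; exact lt_irrefl _ ha
    have hdb0 : 0 ≤ db := by positivity
    -- Eliminating the coefficient `p'` leaves a positive multiple of `s`.
    have h1 : s * (da * (-gb) + db * ga) = 0 := by linear_combination (-gb) * fa + ga * fb
    have h2 : 0 < da * (-gb) + db * ga := by
      have := mul_pos hda0 (neg_pos.2 hgb0)
      have := mul_nonneg hdb0 hga0.le
      linarith
    rcases mul_eq_zero.1 h1 with h | h
    · exact hs h
    · linarith
  have habs : 0 < |m'| := abs_pos.2 hm0
  have hscale : ∀ q, vFn ε v (s / |m'|) (p' / |m'|) (m' / |m'|) q = vFn ε v s p' m' q / |m'| := by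
    intro q; unfold vFn; field_simp
  refine ⟨s / |m'|, p' / |m'|, m' / |m'|, div_ne_zero hs habs.ne', ?_, ?_, ?_, ?_⟩
  · rcases abs_choice m' with h | h <;> rw [h]
    · exact Or.inl (div_self hm0)
    · right; field_simp
  · rw [hscale, fa, zero_div]
  · rw [hscale, fb, zero_div]
  · rw [← hcard]
    congr 2
    ext q
    rw [Finset.mem_filter, Finset.mem_filter, hscale, hform]
    simp [div_neg_iff, habs, not_lt.2 habs.le]

/-- Of two different equations with the same `σ` and with `y ≤ y'`, the second one is strictly
larger on the side `g > g v` if `x ≤ x'`, and on the side `g < g v` if `x' ≤ x`; so the number of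
negative points on that side drops, because the second circle has a point there. -/
lemma triple_param_eq {S : Finset Pt} {ε : ℝ} {v : Pt} {y x y' x' σ : ℝ} {a' b' : Pt}
    (haS : a' ∈ S) (hbS : b' ∈ S)
    (ha : v 0 + ε * v 1 < a' 0 + ε * a' 1) (hb : b' 0 + ε * b' 1 < v 0 + ε * v 1)
    (fa : vFn ε v y' x' σ a' = 0) (fb : vFn ε v y' x' σ b' = 0)
    (hA : (S.filter (fun q => vFn ε v y x σ q < 0 ∧ v 0 + ε * v 1 < q 0 + ε * q 1)).card =
      (S.filter (fun q => vFn ε v y' x' σ q < 0 ∧ v 0 + ε * v 1 < q 0 + ε * q 1)).card)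
    (hB : (S.filter (fun q => vFn ε v y x σ q < 0 ∧ q 0 + ε * q 1 < v 0 + ε * v 1)).card =
      (S.filter (fun q => vFn ε v y' x' σ q < 0 ∧ q 0 + ε * q 1 < v 0 + ε * v 1)).card)
    (hy : y ≤ y') : y = y' ∧ x = x' := by
  have hdiff : ∀ q, vFn ε v y' x' σ q = vFn ε v y x σ q
      + (y' - y) * ((q 0 - v 0) ^ 2 + (q 1 - v 1) ^ 2)
      + (x' - x) * ((q 0 + ε * q 1) - (v 0 + ε * v 1)) := by
    intro q; unfold vFn; ring
  have hpos : ∀ q : Pt, q ≠ v → 0 < (q 0 - v 0) ^ 2 + (q 1 - v 1) ^ 2 := by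
    intro q hq
    rw [← dist_sq_eq]
    exact pow_pos (dist_pos.2 hq) 2
  by_contra hne
  rcases le_total x x' with hx | hx
  · have hlt : ∀ q : Pt, v 0 + ε * v 1 < q 0 + ε * q 1 →
        vFn ε v y x σ q < vFn ε v y' x' σ q := by
      intro q hq
      rw [hdiff]
      have h1 := hpos q (by rintro rfl; exact lt_irrefl _ hq)
      rcases hy.lt_or_eq with h | h
      · have := mul_pos (sub_pos.2 h) h1
        have := mul_nonneg (sub_nonneg.2 hx) (sub_pos.2 hq).le
        linarith
      · have hxx : x < x' := lt_of_le_of_ne hx fun h' => hne ⟨h, h'⟩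
        have := mul_nonneg (sub_nonneg.2 hy) h1.le
        have := mul_pos (sub_pos.2 hxx) (sub_pos.2 hq)
        linarith
    refine absurd hA (Finset.card_lt_card ?_).ne'
    refine Finset.ssubset_iff_of_subset ?_ |>.2 ⟨a', ?_, ?_⟩
    · intro q hq
      obtain ⟨h1, h2, h3⟩ := Finset.mem_filter.1 hq
      exact Finset.mem_filter.2 ⟨h1, (hlt q h3).trans h2, h3⟩
    · exact Finset.mem_filter.2 ⟨haS, fa ▸ hlt a' ha, ha⟩
    · simp [fa]
  · have hlt : ∀ q : Pt, q 0 + ε * q 1 < v 0 + ε * v 1 →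
        vFn ε v y x σ q < vFn ε v y' x' σ q := by
      intro q hq
      rw [hdiff]
      have h1 := hpos q (by rintro rfl; exact lt_irrefl _ hq)
      rcases hy.lt_or_eq with h | h
      · have := mul_pos (sub_pos.2 h) h1
        have := mul_nonneg_of_nonpos_of_nonpos (sub_nonpos.2 hx) (sub_neg.2 hq).le
        linarith
      · have hxx : x' < x := lt_of_le_of_ne hx fun h' => hne ⟨h, h'.symm⟩
        have := mul_nonneg (sub_nonneg.2 hy) h1.le
        have := mul_pos_of_neg_of_neg (sub_neg.2 hxx) (sub_neg.2 hq)
        linarith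
    refine absurd hB (Finset.card_lt_card ?_).ne'
    refine Finset.ssubset_iff_of_subset ?_ |>.2 ⟨b', ?_, ?_⟩
    · intro q hq
      obtain ⟨h1, h2, h3⟩ := Finset.mem_filter.1 hq
      exact Finset.mem_filter.2 ⟨h1, (hlt q h3).trans h2, h3⟩
    · exact Finset.mem_filter.2 ⟨hbS, fb ▸ hlt b' hb, hb⟩
    · simp [fb]

open Classical in
/-- The pairs `(a, b)` forming with `v` a `k`-circle triple whose middle point is `v` are determined
by the sign `σ` and by the number (less than `k`) of negative points with `g > g v`. -/
lemma card_pairs_le {S : Finset Pt} (hS : GenPos (S : Set Pt)) (k : ℕ) {ε : ℝ}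
    (hε : ∀ q ∈ S, ∀ q' ∈ S, q 0 + ε * q 1 = q' 0 + ε * q' 1 → q = q') {v : Pt} (hv : v ∈ S) :
    ((S ×ˢ S).filter (fun ab => v 0 + ε * v 1 < ab.1 0 + ε * ab.1 1 ∧
      ab.2 0 + ε * ab.2 1 < v 0 + ε * v 1 ∧ IsKTriple S k v ab.1 ab.2)).card ≤ 2 * k := by
  set P := (S ×ˢ S).filter (fun ab => v 0 + ε * v 1 < ab.1 0 + ε * ab.1 1 ∧
      ab.2 0 + ε * ab.2 1 < v 0 + ε * v 1 ∧ IsKTriple S k v ab.1 ab.2) with hP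
  have hmem : ∀ ab ∈ P, ab.1 ∈ S ∧ ab.2 ∈ S ∧ v 0 + ε * v 1 < ab.1 0 + ε * ab.1 1 ∧
      ab.2 0 + ε * ab.2 1 < v 0 + ε * v 1 ∧ IsKTriple S k v ab.1 ab.2 := by
    intro ab hab
    obtain ⟨h1, h2, h3, h4⟩ := Finset.mem_filter.1 hab
    exact ⟨(Finset.mem_product.1 h1).1, (Finset.mem_product.1 h1).2, h2, h3, h4⟩
  have hex : ∀ ab : Pt × Pt, ∃ y x σ : ℝ, ab ∈ P → (y ≠ 0 ∧ (σ = 1 ∨ σ = -1) ∧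
      vFn ε v y x σ ab.1 = 0 ∧ vFn ε v y x σ ab.2 = 0 ∧
      (S.filter (fun q => vFn ε v y x σ q < 0)).card + 1 = k) := by
    intro ab
    by_cases hab : ab ∈ P
    · obtain ⟨_, _, h2, h3, h4⟩ := hmem ab hab
      obtain ⟨y, x, σ, h⟩ := h4.normalise ε h2 h3
      exact ⟨y, x, σ, fun _ => h⟩
    · exact ⟨0, 0, 0, fun h => absurd h hab⟩
  choose y x σ hyx using hex
  set NA : Pt × Pt → ℕ := fun ab => (S.filter (fun q =>
    vFn ε v (y ab) (x ab) (σ ab) q < 0 ∧ v 0 + ε * v 1 < q 0 + ε * q 1)).card with hNA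
  set NB : Pt × Pt → ℕ := fun ab => (S.filter (fun q =>
    vFn ε v (y ab) (x ab) (σ ab) q < 0 ∧ q 0 + ε * q 1 < v 0 + ε * v 1)).card with hNB
  have hsum : ∀ ab ∈ P, NA ab + NB ab + 1 = k := by
    intro ab hab
    rw [← (hyx ab hab).2.2.2.2, hNA, hNB]
    simp only
    rw [← Finset.card_union_of_disjoint]
    · congr 2
      ext q
      simp only [Finset.mem_union, Finset.mem_filter]
      constructor
      · rintro (⟨h1, h2, _⟩ | ⟨h1, h2, _⟩) <;> exact ⟨h1, h2⟩
      · rintro ⟨h1, h2⟩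
        rcases lt_trichotomy (v 0 + ε * v 1) (q 0 + ε * q 1) with h | h | h
        · exact Or.inl ⟨h1, h2, h⟩
        · obtain rfl := hε v hv q h1 h
          unfold vFn at h2
          norm_num at h2
        · exact Or.inr ⟨h1, h2, h⟩
    · rw [Finset.disjoint_left]
      intro q hq hq'
      have h1 := (Finset.mem_filter.1 hq).2.2
      have h2 := (Finset.mem_filter.1 hq').2.2
      linarith
  have hcard : (({1, -1} : Finset ℝ) ×ˢ Finset.range k).card ≤ 2 * k := by
    rw [Finset.card_product, Finset.card_range]
    exact Nat.mul_le_mul_right _ Finset.card_le_two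
  refine le_trans (Finset.card_le_card_of_injOn (fun ab => (σ ab, NA ab)) ?_ ?_) hcard
  · intro ab hab
    have h1 := (hyx ab hab).2.1
    have h2 := hsum ab hab
    simp only [Finset.coe_product, Set.mem_prod, Finset.mem_coe, Finset.mem_insert,
      Finset.mem_singleton, Finset.mem_range]
    exact ⟨h1, by omega⟩
  · intro ab hab ab' hab' heq
    obtain ⟨hσ, hN⟩ := Prod.mk.inj heq
    have hab : ab ∈ P := hab
    have hab' : ab' ∈ P := hab'
    have hNB' : NB ab = NB ab' := by
      have := hsum ab hab
      have := hsum ab' hab'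
      omega
    obtain ⟨ha, hb, ga, gb, _⟩ := hmem ab hab
    obtain ⟨ha', hb', ga', gb', _⟩ := hmem ab' hab'
    obtain ⟨hy0, _, fa, fb, _⟩ := hyx ab hab
    obtain ⟨_, _, fa', fb', _⟩ := hyx ab' hab'
    simp only [hNA, hNB] at hN hNB'
    rw [← hσ] at fa' fb' hN hNB'
    have hpar : y ab = y ab' ∧ x ab = x ab' := by
      rcases le_total (y ab) (y ab') with h | h
      · exact triple_param_eq ha' hb' ga' gb' fa' fb' hN hNB' h
      · have := triple_param_eq ha hb ga gb fa fb hN.symm hNB'.symm h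
        exact ⟨this.1.symm, this.2.symm⟩
    rw [← hpar.1, ← hpar.2] at fa' fb'
    have fv : vFn ε v (y ab) (x ab) (σ ab) v = 0 := by unfold vFn; ring
    obtain ⟨p, m, d, hc⟩ := vFn_eq_circFn ε v (y ab) (x ab) (σ ab)
    rw [hc] at fa fb fa' fb' fv
    have ne_of : ∀ q q' : Pt, q 0 + ε * q 1 < q' 0 + ε * q' 1 → q ≠ q' := by
      rintro q q' h rfl; exact lt_irrefl _ h
    refine Prod.ext ?_ ?_
    · by_contra hne
      exact hS.not_four hy0 hv ha hb ha' (ne_of _ _ ga) (ne_of _ _ gb).symm (ne_of _ _ ga')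
        (ne_of _ _ (gb.trans ga)).symm hne (ne_of _ _ (gb.trans ga')) fv fa fb fa'
    · by_contra hne
      exact hS.not_four hy0 hv ha hb hb' (ne_of _ _ ga) (ne_of _ _ gb).symm (ne_of _ _ gb').symm
        (ne_of _ _ (gb.trans ga)).symm (ne_of _ _ (gb'.trans ga)).symm hne fv fa fb fb'

open Classical in
/-- The triples `(v, a, b)` on a `k`-circle, listed with the middle, the largest and the smallest
point with respect to `g q = q 0 + ε q 1`. -/
def kTriples (S : Finset Pt) (k : ℕ) (ε : ℝ) : Finset (Pt × Pt × Pt) :=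
  (S ×ˢ (S ×ˢ S)).filter (fun t => t.1 0 + ε * t.1 1 < t.2.1 0 + ε * t.2.1 1 ∧
    t.2.2 0 + ε * t.2.2 1 < t.1 0 + ε * t.1 1 ∧ IsKTriple S k t.1 t.2.1 t.2.2)

lemma card_triples_le {S : Finset Pt} (hS : GenPos (S : Set Pt)) (k : ℕ) {ε : ℝ}
    (hε : ∀ q ∈ S, ∀ q' ∈ S, q 0 + ε * q 1 = q' 0 + ε * q' 1 → q = q') :
    (kTriples S k ε).card ≤ 2 * k * S.card := by
  classical
  refine Finset.card_le_mul_card_image_of_maps_to (f := Prod.fst) (t := S) ?_ _ ?_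
  · intro t ht
    exact (Finset.mem_product.1 (Finset.mem_filter.1 ht).1).1
  · intro v hv
    refine le_trans (Finset.card_le_card_of_injOn Prod.snd ?_ ?_) (card_pairs_le hS k hε hv)
    · intro t ht
      obtain ⟨ht', rfl⟩ := Finset.mem_filter.1 ht
      obtain ⟨h1, h2⟩ := Finset.mem_filter.1 ht'
      exact Finset.mem_filter.2 ⟨(Finset.mem_product.1 h1).2, h2⟩
    · intro t ht t' ht' h
      have h1 := (Finset.mem_filter.1 ht).2
      have h2 := (Finset.mem_filter.1 ht').2
      exact Prod.ext (h1.trans h2.symm) h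

lemma exists_injective_slope (S : Finset Pt) :
    ∃ ε : ℝ, ∀ q ∈ S, ∀ q' ∈ S, q 0 + ε * q 1 = q' 0 + ε * q' 1 → q = q' := by
  classical
  obtain ⟨ε, hε⟩ := Infinite.exists_notMem_finset
    ((S ×ˢ S).image (fun t => -(t.1 0 - t.2 0) / (t.1 1 - t.2 1)))
  refine ⟨ε, fun q hq q' hq' h => ?_⟩
  have h1 : q 1 = q' 1 := by
    by_contra hne
    refine hε (Finset.mem_image.2 ⟨(q, q'), Finset.mem_product.2 ⟨hq, hq'⟩, ?_⟩)
    have : q 1 - q' 1 ≠ 0 := sub_ne_zero.2 hne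
    simp only
    rw [div_eq_iff this]
    linarith
  have h0 : q 0 = q' 0 := by rw [h1] at h; linarith
  ext i
  fin_cases i
  · exact h0
  · exact h1

/-! ### Counting bichromatic pairs -/

lemma IsKTriple.swap {S : Finset Pt} {k : ℕ} {u v w : Pt} (h : IsKTriple S k u v w) :
    IsKTriple S k v u w := by
  obtain ⟨s, p, m, d, hs, h1, h2, h3, h4⟩ := h
  exact ⟨s, p, m, d, hs, h2, h1, h3, h4⟩

lemma IsKTriple.rotate {S : Finset Pt} {k : ℕ} {u v w : Pt} (h : IsKTriple S k u v w) :
    IsKTriple S k v w u := by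
  obtain ⟨s, p, m, d, hs, h1, h2, h3, h4⟩ := h
  exact ⟨s, p, m, d, hs, h2, h3, h1, h4⟩

/-- If every bichromatic pair extends to a `k`-circle triple, then `|R| |B| ≤ 3 · 2 k n`. -/
lemma card_mul_card_le {R B S : Finset Pt} (hRS : R ⊆ S) (hBS : B ⊆ S) (hdisj : Disjoint R B)
    (hS : GenPos (S : Set Pt)) (k : ℕ)
    (h : ∀ u ∈ R, ∀ v ∈ B, ∃ w ∈ S, w ≠ u ∧ w ≠ v ∧ IsKTriple S k u v w) :
    R.card * B.card ≤ 6 * k * S.card := by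
  classical
  obtain ⟨ε, hε⟩ := exists_injective_slope S
  -- The red point of a bichromatic pair is put first, so that each pair of points of a triple
  -- accounts for only one element of `R × B`.
  set col : Pt → Pt → Pt × Pt := fun p q => if p ∈ R then (p, q) else (q, p) with hcol
  set T := kTriples S k ε with hT
  have hTmem : ∀ v ∈ S, ∀ a ∈ S, ∀ b ∈ S, v 0 + ε * v 1 < a 0 + ε * a 1 →
      b 0 + ε * b 1 < v 0 + ε * v 1 → IsKTriple S k v a b → (v, a, b) ∈ T := by
    intro v hv a ha b hb h1 h2 h3
    exact Finset.mem_filter.2 ⟨Finset.mem_product.2 ⟨hv, Finset.mem_product.2 ⟨ha, hb⟩⟩, h1, h2, h3⟩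
  have hsub : R ×ˢ B ⊆ T.image (fun t => col t.1 t.2.1) ∪ T.image (fun t => col t.1 t.2.2) ∪
      T.image (fun t => col t.2.1 t.2.2) := by
    rintro ⟨u, v⟩ huv
    obtain ⟨hu, hv⟩ := Finset.mem_product.1 huv
    simp only at hu hv
    have hvR : v ∉ R := fun h' => Finset.disjoint_left.1 hdisj h' hv
    have c1 : col u v = (u, v) := by simp [hcol, hu]
    have c2 : col v u = (u, v) := by simp [hcol, hvR]
    obtain ⟨w, hw, hwu, hwv, hK⟩ := h u hu v hv
    have huS := hRS hu
    have hvS := hBS hv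
    have huv' : u ≠ v := by rintro rfl; exact hvR hu
    have n1 : u 0 + ε * u 1 ≠ v 0 + ε * v 1 := fun h' => huv' (hε u huS v hvS h')
    have n2 : w 0 + ε * w 1 ≠ u 0 + ε * u 1 := fun h' => hwu (hε w hw u huS h')
    have n3 : w 0 + ε * w 1 ≠ v 0 + ε * v 1 := fun h' => hwv (hε w hw v hvS h')
    simp only [Finset.mem_union, Finset.mem_image]
    rcases n1.lt_or_gt with l1 | l1 <;> rcases n2.lt_or_gt with l2 | l2 <;>
      rcases n3.lt_or_gt with l3 | l3
    · exact Or.inl (Or.inl ⟨_, hTmem u huS v hvS w hw l1 l2 hK, c1⟩)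
    · linarith
    · exact Or.inr ⟨_, hTmem w hw v hvS u huS l3 l2 hK.rotate.swap, c2⟩
    · exact Or.inl (Or.inr ⟨_, hTmem v hvS w hw u huS l3 l1 hK.rotate, c2⟩)
    · exact Or.inl (Or.inl ⟨_, hTmem v hvS u huS w hw l1 l3 hK.swap, c2⟩)
    · exact Or.inr ⟨_, hTmem w hw u huS v hvS l2 l3 hK.rotate.rotate, c1⟩
    · linarith
    · exact Or.inl (Or.inr ⟨_, hTmem u huS w hw v hvS l2 l1 hK.swap.rotate, c1⟩)
  have h1 := Finset.card_le_card hsub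
  rw [Finset.card_product] at h1
  have h2 : T.card ≤ 2 * k * S.card := card_triples_le hS k hε
  have h3 := Finset.card_union_le (T.image (fun t => col t.1 t.2.1) ∪
    T.image (fun t => col t.1 t.2.2)) (T.image (fun t => col t.2.1 t.2.2))
  have h4 := Finset.card_union_le (T.image (fun t => col t.1 t.2.1))
    (T.image (fun t => col t.1 t.2.2))
  have h5 : (T.image (fun t => col t.1 t.2.1)).card ≤ T.card := Finset.card_image_le
  have h6 : (T.image (fun t => col t.1 t.2.2)).card ≤ T.card := Finset.card_image_le
  have h7 : (T.image (fun t => col t.2.1 t.2.2)).card ≤ T.card := Finset.card_image_le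
  have h8 : 6 * k * S.card = 3 * (2 * k * S.card) := by ring
  omega

/-- For every even `n ≥ 28`, every set of `n` points in the plane in general position
partitioned into `n/2` red points `R` and `n/2` blue points `B`, and every positive
integer `k` with `k < n/(14 + 2√43)`, there exist a red point `u ∈ R` and a blue point
`v ∈ B` such that every closed disk having both `u` and `v` on its boundary contains at
least `k` points of the set in its open interior and leaves at least `k` points of the
set strictly outside. -/
theorem pi_bichrom_in_out_lower_bound (n : ℕ) (hn : 28 ≤ n) (heven : Even n)
    (R B : Set Pt) (hfinR : R.Finite) (hfinB : B.Finite) (hdisj : Disjoint R B)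
    (hR : R.ncard = n / 2) (hB : B.ncard = n / 2) (hgp : GenPos (R ∪ B))
    (k : ℕ) (hk : 0 < k)
    (hineq : (k : ℝ) < (n : ℝ) / (14 + 2 * Real.sqrt 43)) :
    ∃ u ∈ R, ∃ v ∈ B,
      ∀ (c : Pt) (r : ℝ), 0 < r → dist u c = r → dist v c = r →
        k ≤ ((R ∪ B) ∩ ball c r).ncard ∧
        k ≤ ((R ∪ B) ∩ {x | r < dist x c}).ncard := by
  classical
  by_contra hcon
  push Not at hcon
  set R' := hfinR.toFinset with hR'
  set B' := hfinB.toFinset with hB'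
  set S := R' ∪ B' with hSdef
  have hScoe : (S : Set Pt) = R ∪ B := by simp [hSdef, hR', hB']
  have hcR : R'.card = n / 2 := by rw [← hR, Set.ncard_eq_toFinset_card R hfinR]
  have hcB : B'.card = n / 2 := by rw [← hB, Set.ncard_eq_toFinset_card B hfinB]
  have hdisj' : Disjoint R' B' := by
    rw [← Finset.disjoint_coe]; simpa [hR', hB'] using hdisj
  obtain ⟨l, hl⟩ := heven
  have hcS : S.card = n := by
    rw [hSdef, Finset.card_union_of_disjoint hdisj', hcR, hcB]; omega
  have hkn : 27 * k < n := by
    have h1 : (6.5 : ℝ) ≤ Real.sqrt 43 := Real.le_sqrt_of_sq_le (by norm_num)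
    rw [lt_div_iff₀ (by linarith)] at hineq
    have h2 : (27 : ℝ) * k < n := by
      have : (0 : ℝ) ≤ k := Nat.cast_nonneg k
      nlinarith
    exact_mod_cast h2
  have hgp' : GenPos (S : Set Pt) := hScoe ▸ hgp
  have hbad : ∀ u ∈ R', ∀ v ∈ B', ∃ w ∈ S, w ≠ u ∧ w ≠ v ∧ IsKTriple S k u v w := by
    intro u hu v hv
    have huR : u ∈ R := by simpa [hR'] using hu
    have hvB : v ∈ B := by simpa [hB'] using hv
    have huv : u ≠ v := by
      rintro rfl; exact Set.disjoint_left.1 hdisj huR hvB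
    have huS : u ∈ S := Finset.mem_union_left _ hu
    have hvS : v ∈ S := Finset.mem_union_right _ hv
    obtain ⟨c, r, hr, hur, hvr, himp⟩ := hcon u huR v hvB
    -- Up to the factor `σ`, this is the power of `q` with respect to the circle; `σ = 1` makes the
    -- interior negative and `σ = -1` the exterior.
    have hF : ∀ (σ : ℝ) (q : Pt), circFn σ (-2 * σ * c 0) (-2 * σ * c 1)
        (σ * (c 0 ^ 2 + c 1 ^ 2 - r ^ 2)) q = σ * (dist q c ^ 2 - r ^ 2) := by
      intro σ q; rw [dist_sq_eq]; unfold circFn; ring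
    by_cases hin : k ≤ ((R ∪ B) ∩ ball c r).ncard
    · have hout := himp hin
      refine exists_isKTriple_of_lt hgp' (by omega) huS hvS huv (s := -1) (by norm_num)
        (by rw [hF, hur]; ring) (by rw [hF, hvr]; ring) ?_
      refine lt_of_eq_of_lt ?_ hout
      rw [← hScoe, ← Set.ncard_coe_finset]
      congr 1
      ext q
      simp only [hF, Finset.coe_filter, Set.mem_ofPred_eq, Set.mem_inter_iff, Finset.mem_coe]
      have := pow_lt_pow_iff_left₀ hr.le (dist_nonneg (x := q) (y := c)) two_ne_zero
      rw [← this]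
      constructor
      · rintro ⟨h1, h2⟩; exact ⟨h1, by linarith⟩
      · rintro ⟨h1, h2⟩; exact ⟨h1, by linarith⟩
    · push Not at hin
      refine exists_isKTriple_of_lt hgp' (by omega) huS hvS huv (s := 1) (by norm_num)
        (by rw [hF, hur]; ring) (by rw [hF, hvr]; ring) ?_
      refine lt_of_eq_of_lt ?_ hin
      rw [← hScoe, ← Set.ncard_coe_finset]
      congr 1
      ext q
      simp only [hF, Finset.coe_filter, Set.mem_ofPred_eq, Set.mem_inter_iff, Finset.mem_coe,
        mem_ball]
      have := pow_lt_pow_iff_left₀ (dist_nonneg (x := q) (y := c)) hr.le two_ne_zero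
      rw [← this]
      constructor
      · rintro ⟨h1, h2⟩; exact ⟨h1, by linarith⟩
      · rintro ⟨h1, h2⟩; exact ⟨h1, by linarith⟩
  have hfinal := card_mul_card_le Finset.subset_union_left Finset.subset_union_right hdisj' hgp' k
    hbad
  rw [hcR, hcB, hcS] at hfinal
  have hn2 : n / 2 = l := by omega
  rw [hn2, hl] at hfinal
  have : 12 * k < l := by omega
  nlinarith
end
end

section
/- Let p and q be distinct points of the Euclidean plane, let m = (p+q)/2 be their midpoint, and let w be a unit vector orthogonal to q − p. For a real number s, let D_s denote the closed disk centered at c_s = m + s·w with radius dist(c_s, p) (so that p and q lie on the boundary of D_s). Then for all real numbers s ≤ t, every point x ∈ D_s satisfying ⟨x − m, w⟩ ≥ 0 belongs to D_t. -/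
/-! The power of a point `x` with respect to the disk `D r` is
`‖x - m‖² - 2 r ⟪x - m, w⟫ - ‖p - m‖²`, where `m` is the midpoint of `p` and `q`: the terms in
`r²` cancel, and `⟪p - m, w⟫ = 0`. It is affine in `r` with slope `-2 ⟪x - m, w⟫`, hence
nonincreasing in `r` on the side `⟪x - m, w⟫ ≥ 0`, so nonpositivity passes from `s` to `t`. -/

open EuclideanGeometry Metric
open scoped RealInnerProductSpace

noncomputable section

/-- Membership in the disk `D r` as nonpositivity of the power of `x`. -/
lemma mem_disk_iff_power_nonpos (p m w x : Pt) (hp : ⟪p - m, w⟫ = 0) (r : ℝ) :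
    x ∈ closedBall (m + r • w) (dist (m + r • w) p) ↔
      ‖x - m‖ ^ 2 - 2 * r * ⟪x - m, w⟫ - ‖p - m‖ ^ 2 ≤ 0 := by
  have key : ∀ y : Pt, dist y (m + r • w) ^ 2
      = ‖y - m‖ ^ 2 - 2 * r * ⟪y - m, w⟫ + ‖r • w‖ ^ 2 := by
    intro y
    rw [dist_eq_norm, ← sub_sub, norm_sub_sq_real, real_inner_smul_right]
    ring
  rw [mem_closedBall, dist_comm (m + r • w) p, ← sq_le_sq₀ dist_nonneg dist_nonneg,
    key x, key p, hp]
  constructor <;> intro h <;> linarith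

/-- Let `p ≠ q` be points of the plane, `m` their midpoint and `w` a unit vector
orthogonal to `q − p`. For `s : ℝ`, let `D s` be the closed disk centered at
`m + s • w` with `p` (and hence `q`) on its boundary. Then for `s ≤ t`, every point of
`D s` lying on the side `⟪x − m, w⟫ ≥ 0` of the line `pq` belongs to `D t`. -/
theorem disk_containment_along_bisector (p q : Pt) (hpq : p ≠ q)
    (w : Pt) (hw : ‖w‖ = 1) (horth : ⟪w, q - p⟫ = 0)
    (s t : ℝ) (hst : s ≤ t) (x : Pt)
    (hx : x ∈ closedBall (midpoint ℝ p q + s • w)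
      (dist (midpoint ℝ p q + s • w) p))
    (hside : 0 ≤ ⟪x - midpoint ℝ p q, w⟫) :
    x ∈ closedBall (midpoint ℝ p q + t • w)
      (dist (midpoint ℝ p q + t • w) p) := by
  have hp : ⟪p - midpoint ℝ p q, w⟫ = 0 := by
    rw [left_sub_midpoint, real_inner_smul_left, real_inner_comm, ← neg_sub q p,
      inner_neg_right, horth, neg_zero, mul_zero]
  rw [mem_disk_iff_power_nonpos p _ w x hp] at hx ⊢
  nlinarith [mul_nonneg (sub_nonneg.2 hst) hside]
end
end
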